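/- arXiv:math/0610937 — 7 statements merged into one kernel-verified Lean document; each statement's English description precedes it below -/
import Mathlib

section
/- Let G be a loopless multigraph on Fin n and let d be a metric on Fin n whose distance matrix D (given by D i j = d(i,j)²) is Euclidean, reconstructing, and commuting. Then there exist k and a map f : Fin n → EuclideanSpace ℝ (Fin k) with dist (f i) (f j) = d(i,j) for all i, j, such that f is a regular embedding of G. -/
/-!
Let `f` be a realization of `d` whose differences span the ambient Euclidean space; one is obtained
by restricting an arbitrary realization to its vector span
(`exists_spanning_realization`). Two families with the same pairwise distances have
the same Gram matrix relative to corresponding base points, so sending one to the other is a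
well-defined linear isometry (`exists_isometryEquiv_of_dist_eq`); since `D` is commuting, every
automorphism `g` therefore extends to an isometry `φ` with `φ (f i) = f (g i)`. Such a `φ` is
unique by the Mazur–Ulam theorem, as the points `f i` affinely span
(`isometryEquiv_ext_of_spanning`), and uniqueness makes `g ↦ φ` a homomorphism. It is injective
because `f` is, and surjective because an isometry permuting the points `f i` induces a
permutation of the vertices that preserves `D`, hence preserves `μ`, `D` being reconstructing.
-/

/-- The automorphism group of a loopless multigraph on `Fin n` with multiplicity
function `μ`, as a subgroup of the permutation group. -/
def mgAut (n : ℕ) (μ : Fin n → Fin n → ℕ) : Subgroup (Equiv.Perm (Fin n)) where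
  carrier := {g | ∀ i j, μ (g i) (g j) = μ i j}
  one_mem' := fun _ _ => rfl
  mul_mem' := by
    intro a b ha hb i j
    simpa [Equiv.Perm.mul_apply] using (ha (b i) (b j)).trans (hb i j)
  inv_mem' := by
    intro a ha i j
    simpa using (ha (a⁻¹ i) (a⁻¹ j)).symm

/-- The group of isometric bijections of `EuclideanSpace ℝ (Fin k)` mapping the
set `P` onto itself. -/
noncomputable def isomPreserving (k : ℕ) (P : Set (EuclideanSpace ℝ (Fin k))) :
    Subgroup (EuclideanSpace ℝ (Fin k) ≃ᵢ EuclideanSpace ℝ (Fin k)) where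
  carrier := {φ | φ '' P = P}
  one_mem' := by simp
  mul_mem' := by
    intro a b ha hb
    show (a * b) '' P = P
    rw [IsometryEquiv.coe_mul, Set.image_comp, hb, ha]
  inv_mem' := by
    intro a ha
    show ⇑(a⁻¹) '' P = P
    have : ⇑(a⁻¹) = ⇑(a.symm) := rfl
    rw [this, ← ha, Set.image_image]
    simpa using ha.symm

/-- Every finite Euclidean configuration has a congruent copy whose differences span the ambient
space. The spanning condition is on the `vectorSpan`, so that for an empty configuration it forces
the ambient space to be a point. -/
lemma exists_spanning_realization {n m : ℕ} (f₀ : Fin n → EuclideanSpace ℝ (Fin m)) :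
    ∃ (k : ℕ) (f : Fin n → EuclideanSpace ℝ (Fin k)),
      (∀ i j, dist (f i) (f j) = dist (f₀ i) (f₀ j)) ∧
      vectorSpan ℝ (Set.range f) = ⊤ := by
  rcases isEmpty_or_nonempty (Fin n) with hn | ⟨⟨i₀⟩⟩
  · exact ⟨0, fun _ => 0, fun i => hn.elim i, Subsingleton.elim _ _⟩
  let W := vectorSpan ℝ (Set.range f₀)
  let e : W ≃ₗᵢ[ℝ] EuclideanSpace ℝ (Fin (Module.finrank ℝ W)) :=
    (stdOrthonormalBasis ℝ W).repr
  let w : Fin n → W := fun i =>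
    ⟨f₀ i -ᵥ f₀ i₀, vsub_mem_vectorSpan ℝ (Set.mem_range_self i) (Set.mem_range_self i₀)⟩
  have hw₀ : w i₀ = 0 := by simp [w]
  refine ⟨_, fun i => e (w i), fun i j => ?_, ?_⟩
  · rw [e.dist_map, Subtype.dist_eq]
    simp [w]
  · rw [vectorSpan_range_eq_span_range_vsub_right ℝ _ i₀]
    have hspan : Submodule.span ℝ (Set.range w) = ⊤ := by
      apply Submodule.map_injective_of_injective W.injective_subtype
      rw [Submodule.map_span, Submodule.map_top, Submodule.range_subtype, ← Set.range_comp]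
      exact (vectorSpan_range_eq_span_range_vsub_right ℝ f₀ i₀).symm
    have hmap := congrArg (Submodule.map e.toLinearEquiv.toLinearMap) hspan
    rw [Submodule.map_span, ← Set.range_comp, Submodule.map_top, LinearEquiv.range] at hmap
    rw [← hmap]
    simp [hw₀, Function.comp_def]

/-- Two families with equal Gram matrices, the first of which spans the space, are related by a
linear isometry. -/
lemma exists_linearIsometryEquiv_of_inner_eq {n k : ℕ}
    (v w : Fin n → EuclideanSpace ℝ (Fin k))
    (hspan : Submodule.span ℝ (Set.range v) = ⊤)
    (hinner : ∀ i j, inner ℝ (v i) (v j) = inner ℝ (w i) (w j)) :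
    ∃ L : EuclideanSpace ℝ (Fin k) ≃ₗᵢ[ℝ] EuclideanSpace ℝ (Fin k), ∀ i, L (v i) = w i := by
  let T := Fintype.linearCombination ℝ v
  let U := Fintype.linearCombination ℝ w
  have hnorm : ∀ c, ‖U c‖ = ‖T c‖ := by
    intro c
    rw [← sq_eq_sq₀ (norm_nonneg _) (norm_nonneg _), ← real_inner_self_eq_norm_sq,
      ← real_inner_self_eq_norm_sq]
    simp only [T, U, Fintype.linearCombination_apply, sum_inner, inner_sum, inner_smul_left,
      inner_smul_right, hinner]
  have hT : LinearMap.range T = ⊤ := by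
    rw [Fintype.range_linearCombination, hspan]
  -- With `S` a section of `T`, the candidate isometry is `U ∘ S`; it does not depend on `S`
  -- because `ker T = ker U` by `hnorm`.
  obtain ⟨S, hS⟩ := T.exists_rightInverse_of_surjective hT
  have hTS : ∀ x, T (S x) = x := fun x => LinearMap.congr_fun hS x
  let L : EuclideanSpace ℝ (Fin k) →ₗᵢ[ℝ] EuclideanSpace ℝ (Fin k) :=
    { toLinearMap := U ∘ₗ S
      norm_map' := fun x => by
        rw [LinearMap.comp_apply, hnorm, hTS] }
  refine ⟨L.toLinearIsometryEquiv rfl, fun i => ?_⟩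
  have hTv : T (Pi.single i 1) = v i := by simp [T, Fintype.linearCombination_apply_single]
  have hUw : U (Pi.single i 1) = w i := by simp [U, Fintype.linearCombination_apply_single]
  have hker : ‖U (S (v i) - Pi.single i 1)‖ = 0 := by
    rw [hnorm, map_sub, hTS, hTv, sub_self, norm_zero]
  rw [norm_eq_zero, map_sub, hUw, sub_eq_zero] at hker
  exact hker

/-- Congruent families, the first of which spans, are related by a global isometry: the distances
determine the Gram matrices of the differences to a base point, by polarization. -/
lemma exists_isometryEquiv_of_dist_eq {n k : ℕ} (a b : Fin n → EuclideanSpace ℝ (Fin k))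
    (hspan : vectorSpan ℝ (Set.range a) = ⊤)
    (hdist : ∀ i j, dist (a i) (a j) = dist (b i) (b j)) :
    ∃ φ : EuclideanSpace ℝ (Fin k) ≃ᵢ EuclideanSpace ℝ (Fin k), ∀ i, φ (a i) = b i := by
  rcases isEmpty_or_nonempty (Fin n) with hn | ⟨⟨i₀⟩⟩
  · exact ⟨IsometryEquiv.refl _, fun i => hn.elim i⟩
  rw [vectorSpan_range_eq_span_range_vsub_right ℝ a i₀] at hspan
  obtain ⟨L, hL⟩ := exists_linearIsometryEquiv_of_inner_eq
    (fun i => a i -ᵥ a i₀) (fun i => b i -ᵥ b i₀) hspan (fun i j => by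
      simp_rw [real_inner_eq_norm_mul_self_add_norm_mul_self_sub_norm_sub_mul_self_div_two,
        vsub_sub_vsub_cancel_right, ← dist_eq_norm_vsub, hdist])
  refine ⟨((IsometryEquiv.subRight (a i₀)).trans L.toIsometryEquiv).trans
    (IsometryEquiv.addRight (b i₀)), fun i => ?_⟩
  have := hL i
  simp only [vsub_eq_sub] at this
  simp [-map_sub, this]

/-- Isometries are affine by the Mazur–Ulam theorem, so they are determined on an affinely spanning
family. -/
lemma isometryEquiv_ext_of_spanning {n k : ℕ} (f : Fin n → EuclideanSpace ℝ (Fin k))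
    (hspan : vectorSpan ℝ (Set.range f) = ⊤)
    (φ ψ : EuclideanSpace ℝ (Fin k) ≃ᵢ EuclideanSpace ℝ (Fin k))
    (h : ∀ i, φ (f i) = ψ (f i)) : φ = ψ := by
  rcases isEmpty_or_nonempty (Fin n) with hn | hn
  · -- The vector span of the empty set is trivial, so the ambient space is a single point.
    rw [Set.range_eq_empty, vectorSpan_empty] at hspan
    have := subsingleton_of_bot_eq_top hspan
    have := (Submodule.subsingleton_iff ℝ).mp this
    exact IsometryEquiv.ext fun x => Subsingleton.elim _ _
  · have haff : affineSpan ℝ (Set.range f) = ⊤ :=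
      (AffineSubspace.affineSpan_eq_top_iff_vectorSpan_eq_top_of_nonempty ℝ _ _
        (Set.range_nonempty f)).mpr hspan
    have key : φ.toRealAffineIsometryEquiv.toAffineEquiv.toAffineMap =
        ψ.toRealAffineIsometryEquiv.toAffineEquiv.toAffineMap := by
      apply AffineMap.ext_on haff
      rintro _ ⟨i, rfl⟩
      exact h i
    exact IsometryEquiv.ext fun x => congrArg (fun F : _ →ᵃ[ℝ] _ => F x) key

/-- An isometry preserving the image of an injective family permutes its indices. -/
lemma exists_perm_of_mem_isomPreserving {n k : ℕ} {f : Fin n → EuclideanSpace ℝ (Fin k)}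
    (hf : Function.Injective f)
    {φ : EuclideanSpace ℝ (Fin k) ≃ᵢ EuclideanSpace ℝ (Fin k)}
    (hφ : φ ∈ isomPreserving k (Set.range f)) :
    ∃ σ : Equiv.Perm (Fin n), ∀ i, f (σ i) = φ (f i) := by
  have himage : φ '' Set.range f = Set.range f := hφ
  have hex : ∀ i, ∃ j, f j = φ (f i) := fun i => by
    have : φ (f i) ∈ Set.range f := himage ▸ Set.mem_image_of_mem φ (Set.mem_range_self i)
    exact this
  choose s hs using hex
  have hinj : Function.Injective s := fun i j hij => by
    apply hf
    apply φ.injective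
    rw [← hs, ← hs, hij]
  exact ⟨Equiv.ofBijective s (Finite.injective_iff_bijective.mp hinj), hs⟩

/-- If `d` is a metric on the vertex set of a loopless multigraph `G`
whose squared-distance matrix `D` is Euclidean, reconstructing and commuting, then
`D` defines a regular embedding of `G`. -/
theorem euclidean_reconstructing_commuting_gives_regular_embedding
    (n : ℕ) (μ : Fin n → Fin n → ℕ)
    (hsymm : ∀ i j, μ i j = μ j i) (hloop : ∀ i, μ i i = 0)
    (d : Fin n → Fin n → ℝ)
    (hd_symm : ∀ i j, d i j = d j i)
    (hd_eq : ∀ i j, d i j = 0 ↔ i = j)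
    (hd_tri : ∀ i j l, d i l ≤ d i j + d j l)
    (D : Matrix (Fin n) (Fin n) ℝ)
    (hD : ∀ i j, D i j = d i j ^ 2)
    (heucl : ∃ (m : ℕ) (f₀ : Fin n → EuclideanSpace ℝ (Fin m)),
      ∀ i j, dist (f₀ i) (f₀ j) = d i j)
    (hrec : ∃ Ξ : ℝ → ℕ, ∀ i j : Fin n, i ≠ j → μ i j = Ξ (D i j))
    (hcomm : ∀ g ∈ mgAut n μ, ∀ i j : Fin n, D (g i) (g j) = D i j) :
    ∃ (k : ℕ) (f : Fin n → EuclideanSpace ℝ (Fin k)),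
      (∀ i j, dist (f i) (f j) = d i j) ∧
      Nonempty (mgAut n μ ≃* isomPreserving k (Set.range f)) := by
  obtain ⟨m, f₀, hf₀⟩ := heucl
  obtain ⟨Ξ, hΞ⟩ := hrec
  obtain ⟨k, f, hff₀, hspan⟩ := exists_spanning_realization f₀
  have hf : ∀ i j, dist (f i) (f j) = d i j := fun i j => (hff₀ i j).trans (hf₀ i j)
  have hinj : Function.Injective f := fun i j hij => by
    rw [← hd_eq, ← hf, hij, dist_self]
  have hext : ∀ g : mgAut n μ, ∃ φ : EuclideanSpace ℝ (Fin k) ≃ᵢ EuclideanSpace ℝ (Fin k),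
      ∀ i, φ (f i) = f (g.1 i) := fun g => by
    refine exists_isometryEquiv_of_dist_eq f (fun i => f (g.1 i)) hspan fun i j => ?_
    rw [← sq_eq_sq₀ dist_nonneg dist_nonneg, hf, hf, ← hD, ← hD, hcomm g.1 g.2]
  choose Φ hΦ using hext
  have hmem : ∀ g, Φ g ∈ isomPreserving k (Set.range f) := fun g => by
    change Φ g '' Set.range f = Set.range f
    rw [← Set.range_comp]
    have hcomp : ⇑(Φ g) ∘ f = f ∘ g.1 := funext (hΦ g)
    rw [hcomp, g.1.surjective.range_comp]
  let F : mgAut n μ →* isomPreserving k (Set.range f) :=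
    MonoidHom.mk' (fun g => ⟨Φ g, hmem g⟩) fun g h => Subtype.ext <|
      isometryEquiv_ext_of_spanning f hspan _ _ fun i => by
        change Φ (g * h) (f i) = Φ g (Φ h (f i))
        rw [hΦ, hΦ, hΦ]
        rfl
  refine ⟨k, f, hf, ⟨MulEquiv.ofBijective F ⟨fun g h hgh => ?_, fun φ => ?_⟩⟩⟩
  · have hΦeq : Φ g = Φ h := congrArg Subtype.val hgh
    refine Subtype.ext (Equiv.ext fun i => hinj ?_)
    rw [← hΦ, ← hΦ, hΦeq]
  · obtain ⟨σ, hσ⟩ := exists_perm_of_mem_isomPreserving hinj φ.2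
    have hσmem : σ ∈ mgAut n μ := fun i j => by
      rcases eq_or_ne i j with rfl | hij
      · rw [hloop, hloop]
      · rw [hΞ _ _ (σ.injective.ne hij), hΞ _ _ hij, hD, hD, ← hf, ← hf, hσ, hσ,
          φ.1.dist_eq]
    refine ⟨⟨σ, hσmem⟩, Subtype.ext ?_⟩
    apply isometryEquiv_ext_of_spanning f hspan
    intro i
    exact (hΦ ⟨σ, hσmem⟩ i).trans (hσ i)
end

section
/- Let D be an n×n real symmetric matrix with zero diagonal and let k be a positive integer. Then the following are equivalent: (1) there exists a map f : Fin n → EuclideanSpace ℝ (Fin k) such that D i j = (dist (f i) (f j))² for all i, j; (2) the matrix Λ(D) = −(1/2)(I − J/n) D (I − J/n) is positive semidefinite and has rank at most k. -/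
/-!
Write `C = I - J/n`, the orthogonal projection onto the complement of the constant vector.

If `D` consists of the squared distances of the rows of an `n × k` matrix `X`, then
`D = r 1ᵀ + 1 rᵀ - 2 X Xᵀ` with `r i = |x_i|²`; as `C 1 = 0`, this gives `Λ(D) = (C X) (C X)ᵀ`,
which is positive semidefinite of rank at most `k`.

Conversely, a positive semidefinite matrix of rank at most `k` is a Gram matrix `Y Yᵀ` of `n`
vectors in `ℝ^k` (`exists_gram_of_posSemidef`, from the spectral theorem), and `D` is recovered from
`Λ(D)` by `D i j = Λ i i + Λ j j - 2 Λ i j` (`eq_LambdaForm_polarization`). With `Λ(D) = Y Yᵀ` the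
right-hand side is the squared distance between the `i`-th and `j`-th rows of `Y`.
-/

/-- The all-ones matrix `J`. -/
def onesMatrix (n : ℕ) : Matrix (Fin n) (Fin n) ℝ := Matrix.of fun _ _ => 1

/-- The bilinear form `Λ(P) = -(1/2) (I - J/n) P (I - J/n)` associated with a
predistance matrix `P`. -/
noncomputable def LambdaForm (n : ℕ) (P : Matrix (Fin n) (Fin n) ℝ) :
    Matrix (Fin n) (Fin n) ℝ :=
  (-(1 / 2 : ℝ)) • ((1 - (n : ℝ)⁻¹ • onesMatrix n) * P * (1 - (n : ℝ)⁻¹ • onesMatrix n))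

open Matrix

/-- The columns of `Y` are the eigenvectors of `A` with nonzero eigenvalue, each scaled by the
square root of its eigenvalue, padded with zero columns up to `k`. -/
lemma exists_gram_of_posSemidef {n k : ℕ} {A : Matrix (Fin n) (Fin n) ℝ}
    (hA : A.PosSemidef) (hr : A.rank ≤ k) :
    ∃ Y : Matrix (Fin n) (Fin k) ℝ, A = Y * Yᵀ := by
  have hH := hA.isHermitian
  set ev := hH.eigenvalues with hev
  set U : Matrix (Fin n) (Fin n) ℝ := hH.eigenvectorUnitary.1 with hU
  have hspec : ∀ i j, A i j = ∑ l, U i l * ev l * U j l := by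
    intro i j
    conv_lhs => rw [hH.spectral_theorem]
    simp [Unitary.conjStarAlgAut_apply, Matrix.mul_apply, Matrix.diagonal_apply, hU, hev,
      Matrix.star_apply]
  have hcard : Fintype.card {l // ev l ≠ 0} ≤ Fintype.card (Fin k) := by
    rw [Fintype.card_fin, ← hH.rank_eq_card_non_zero_eigs]
    exact hr
  obtain ⟨e⟩ := Function.Embedding.nonempty_of_card_le hcard
  refine ⟨Matrix.of fun i => Function.extend e
    (fun l : {l // ev l ≠ 0} => U i l * √(ev l)) 0, ?_⟩
  ext i j
  rw [hspec, Matrix.mul_apply]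
  trans ∑ l : {l // ev l ≠ 0}, U i l * ev l * U j l
  · symm
    refine Fintype.sum_of_injective Subtype.val Subtype.val_injective _ _ ?_ (fun _ => rfl)
    intro l hl
    have h0 : ev l = 0 := by
      by_contra h
      exact hl ⟨⟨l, h⟩, rfl⟩
    simp [h0]
  · refine Fintype.sum_of_injective e e.injective _ _ ?_ ?_
    · intro a ha
      simp [Function.extend_apply' _ _ _ ha]
    · intro l
      have hs : √(ev l) * √(ev l) = ev l := Real.mul_self_sqrt (hA.eigenvalues_nonneg l)
      simp only [Matrix.transpose_apply, Matrix.of_apply, e.injective.extend_apply]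
      linear_combination (-(U i l * U j l)) * hs

lemma LambdaForm_apply {n : ℕ} (D : Matrix (Fin n) (Fin n) ℝ) (i j : Fin n) :
    LambdaForm n D i j = -(1 / 2) * (D i j - (n : ℝ)⁻¹ * ∑ a, D a j
      - (n : ℝ)⁻¹ * ∑ b, D i b + (n : ℝ)⁻¹ * (n : ℝ)⁻¹ * ∑ b, ∑ a, D a b) := by
  have hL (M : Matrix (Fin n) (Fin n) ℝ) (i j) : (onesMatrix n * M) i j = ∑ a, M a j := by
    simp [Matrix.mul_apply, onesMatrix]
  have hR (M : Matrix (Fin n) (Fin n) ℝ) (i j) : (M * onesMatrix n) i j = ∑ b, M i b := by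
    simp [Matrix.mul_apply, onesMatrix]
  simp only [LambdaForm, sub_mul, mul_sub, one_mul, mul_one, Matrix.smul_mul, Matrix.mul_smul,
    Matrix.smul_apply, Matrix.sub_apply, hL, hR, smul_eq_mul]
  ring

lemma eq_LambdaForm_polarization {n : ℕ} {D : Matrix (Fin n) (Fin n) ℝ}
    (hsymm : D.IsSymm) (hdiag : ∀ i, D i i = 0) (i j : Fin n) :
    D i j = LambdaForm n D i i + LambdaForm n D j j - 2 * LambdaForm n D i j := by
  have hs (i : Fin n) : ∑ a, D a i = ∑ a, D i a :=
    Finset.sum_congr rfl fun a _ => hsymm.apply i a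
  simp only [LambdaForm_apply, hdiag, hs]
  ring

lemma LambdaForm_of_sq_dist {n k : ℕ} {D : Matrix (Fin n) (Fin n) ℝ}
    (X : Matrix (Fin n) (Fin k) ℝ) (h : ∀ i j, D i j = ∑ a, (X i a - X j a) ^ 2) :
    LambdaForm n D = ((1 - (n : ℝ)⁻¹ • onesMatrix n) * X) *
      ((1 - (n : ℝ)⁻¹ • onesMatrix n) * X)ᵀ := by
  set C : Matrix (Fin n) (Fin n) ℝ := 1 - (n : ℝ)⁻¹ • onesMatrix n with hC
  have hCT : Cᵀ = C := by
    ext i j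
    simp [hC, onesMatrix, Matrix.one_apply, eq_comm]
  have hC1 : C *ᵥ 1 = 0 := by
    ext i
    -- the row index witnesses `n ≠ 0`, so that `n⁻¹` is a genuine inverse
    have hn : (n : ℝ) ≠ 0 := by
      have := i.pos
      positivity
    simp [hC, onesMatrix, Matrix.mulVec, dotProduct, Matrix.one_apply, hn]
  have h1C : (1 : Fin n → ℝ) ᵥ* C = 0 := by
    rw [← hCT, Matrix.vecMul_transpose, hC1]
  set r : Fin n → ℝ := fun i => ∑ a, X i a ^ 2
  have hD : D = vecMulVec r 1 + vecMulVec 1 r - (2 : ℝ) • (X * Xᵀ) := by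
    ext i j
    simp only [h, r, Matrix.sub_apply, Matrix.add_apply, Matrix.smul_apply, vecMulVec_apply,
      Matrix.mul_apply, Matrix.transpose_apply, Pi.one_apply, mul_one, one_mul, smul_eq_mul,
      Finset.mul_sum, ← Finset.sum_add_distrib, ← Finset.sum_sub_distrib]
    exact Finset.sum_congr rfl fun a _ => by ring
  clear_value C
  have hCDC : C * D * C = (-2 : ℝ) • (C * (X * Xᵀ) * C) := by
    rw [hD, Matrix.mul_sub C, Matrix.mul_add C, sub_mul, add_mul, mul_vecMulVec, mul_vecMulVec, vecMulVec_mul,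
      vecMulVec_mul, hC1, h1C]
    simp
  rw [LambdaForm, ← hC, hCDC, smul_smul, Matrix.transpose_mul, hCT]
  norm_num [Matrix.mul_assoc]

/-- A predistance matrix `D` (symmetric, zero diagonal) is the matrix of
squared Euclidean distances of a point configuration in `ℝ^k` if and only if
`Λ(D) = -(1/2)(I - J/n) D (I - J/n)` is positive semidefinite of rank at most `k`. -/
theorem euclidean_distance_matrix_iff (n k : ℕ) (hk : 0 < k)
    (D : Matrix (Fin n) (Fin n) ℝ)
    (hsymm : D.IsSymm) (hdiag : ∀ i, D i i = 0) :
    (∃ f : Fin n → EuclideanSpace ℝ (Fin k), ∀ i j, D i j = dist (f i) (f j) ^ 2) ↔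
      ((LambdaForm n D).PosSemidef ∧ (LambdaForm n D).rank ≤ k) := by
  have hdist (x y : EuclideanSpace ℝ (Fin k)) : dist x y ^ 2 = ∑ a, (x a - y a) ^ 2 := by
    rw [EuclideanSpace.dist_eq, Real.sq_sqrt (by positivity)]
    simp [Real.dist_eq, sq_abs]
  constructor
  · rintro ⟨f, hf⟩
    rw [LambdaForm_of_sq_dist (Matrix.of fun i a => f i a)
      (fun i j => by rw [hf, hdist]; simp)]
    refine ⟨?_, (Matrix.rank_mul_le_left _ _).trans (Matrix.rank_le_width _)⟩
    rw [← Matrix.conjTranspose_eq_transpose_of_trivial]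
    exact Matrix.posSemidef_self_mul_conjTranspose _
  · rintro ⟨hpsd, hrank⟩
    obtain ⟨Y, hY⟩ := exists_gram_of_posSemidef hpsd hrank
    refine ⟨fun i => WithLp.toLp 2 (Y i), fun i j => ?_⟩
    rw [hdist, eq_LambdaForm_polarization hsymm hdiag i j, hY]
    simp only [Matrix.mul_apply, Matrix.transpose_apply, Finset.mul_sum,
      ← Finset.sum_add_distrib, ← Finset.sum_sub_distrib]
    exact Finset.sum_congr rfl fun a _ => by ring
end

section
/- Let G be an irreducible (twin-free) loopless multigraph on Fin n and let P be a commuting reconstructing predistance matrix on G. Let m be the multiplicity of the smallest eigenvalue of Λ(P) restricted to the hyperplane 𝟙^⊥, and set ζ(P) = n − m − 1. Then G has a regular embedding f : Fin n → EuclideanSpace ℝ (Fin ζ(P)). -/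
/-- The hyperplane `𝟙^⊥` of vectors whose coordinates sum to `0`. -/
def sumZero (n : ℕ) : Submodule ℝ (Fin n → ℝ) where
  carrier := {v | ∑ i, v i = 0}
  add_mem' := by
    intro a b ha hb
    show ∑ i, (a i + b i) = 0
    rw [Finset.sum_add_distrib]
    rw [show ∑ i, a i = 0 from ha, show ∑ i, b i = 0 from hb, add_zero]
  zero_mem' := by simp
  smul_mem' := by
    intro c v hv
    show ∑ i, c * v i = 0
    rw [← Finset.mul_sum, show ∑ i, v i = 0 from hv, mul_zero]

open Matrix

/-! ### The shifted form and its rank -/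

/-- The matrix `Λ(P) - c (I - J/n)`: the form `Λ(P)` shifted on `𝟙^⊥` so that the eigenvalue `c`
becomes `0`, while `𝟙` stays in the kernel. -/
noncomputable def shiftedForm (n : ℕ) (P : Matrix (Fin n) (Fin n) ℝ) (c : ℝ) :
    Matrix (Fin n) (Fin n) ℝ :=
  LambdaForm n P - c • (1 - (n : ℝ)⁻¹ • onesMatrix n)

lemma onesMatrix_mulVec (n : ℕ) (v : Fin n → ℝ) :
    (onesMatrix n) *ᵥ v = fun _ => ∑ i, v i := by
  ext i
  simp [onesMatrix, mulVec, dotProduct]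

lemma centering_mulVec_one (n : ℕ) :
    (1 - (n : ℝ)⁻¹ • onesMatrix n) *ᵥ (fun _ => (1 : ℝ)) = 0 := by
  ext i
  have hn : (n : ℝ) ≠ 0 := by
    have := i.pos
    positivity
  simp [sub_mulVec, smul_mulVec, onesMatrix_mulVec, hn]

lemma shifted_mulVec_one (n : ℕ) (P : Matrix (Fin n) (Fin n) ℝ) (c : ℝ) :
    (shiftedForm n P c) *ᵥ (fun _ => (1 : ℝ)) = 0 := by
  rw [shiftedForm, LambdaForm, sub_mulVec, smul_mulVec, smul_mulVec, ← mulVec_mulVec,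
    centering_mulVec_one]
  simp

lemma shifted_mulVec_of_sum_eq_zero (n : ℕ) (P : Matrix (Fin n) (Fin n) ℝ) (c : ℝ)
    (v : Fin n → ℝ) (hv : ∑ i, v i = 0) :
    (shiftedForm n P c) *ᵥ v = (LambdaForm n P) *ᵥ v - c • v := by
  rw [shiftedForm, sub_mulVec, smul_mulVec, sub_mulVec, smul_mulVec, onesMatrix_mulVec, hv]
  ext i
  simp

lemma onesMatrix_transpose (n : ℕ) : (onesMatrix n)ᵀ = onesMatrix n := by
  ext i j
  simp [onesMatrix]

lemma shifted_transpose (n : ℕ) (P : Matrix (Fin n) (Fin n) ℝ) (hP : P.IsSymm) (c : ℝ) :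
    (shiftedForm n P c)ᵀ = shiftedForm n P c := by
  simp [shiftedForm, LambdaForm, transpose_mul, onesMatrix_transpose, hP.eq, Matrix.mul_assoc]

lemma shifted_isHermitian (n : ℕ) (P : Matrix (Fin n) (Fin n) ℝ) (hP : P.IsSymm) (c : ℝ) :
    (shiftedForm n P c).IsHermitian := by
  rw [IsHermitian, conjTranspose_eq_transpose_of_trivial, shifted_transpose n P hP c]

/-- An eigenvector of the shifted form for a nonzero eigenvalue is orthogonal to `𝟙`, hence an
eigenvector of `Λ(P)` on `𝟙^⊥`, and minimality of `c` applies to it. -/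
lemma shifted_posSemidef (n : ℕ) (P : Matrix (Fin n) (Fin n) ℝ) (hP : P.IsSymm) (c : ℝ)
    (hc_min : ∀ (lam : ℝ) (v : Fin n → ℝ), v ≠ 0 → (∑ i, v i) = 0 →
      (LambdaForm n P).mulVec v = lam • v → c ≤ lam) :
    (shiftedForm n P c).PosSemidef := by
  have hH := shifted_isHermitian n P hP c
  rw [hH.posSemidef_iff_eigenvalues_nonneg]
  intro k
  by_contra hneg
  have hneg : hH.eigenvalues k < 0 := by simpa using hneg
  set v : Fin n → ℝ := ⇑(hH.eigenvectorBasis k) with hv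
  have hAv : shiftedForm n P c *ᵥ v = hH.eigenvalues k • v := hH.mulVec_eigenvectorBasis k
  have hv0 : v ≠ 0 := by
    intro h
    apply hH.eigenvectorBasis.toBasis.ne_zero k
    ext i
    simpa using congrFun h i
  have hsum : ∑ i, v i = 0 := by
    have h1 : (fun _ => (1 : ℝ)) ⬝ᵥ (shiftedForm n P c *ᵥ v) = 0 := by
      rw [dotProduct_mulVec, ← mulVec_transpose, shifted_transpose n P hP, shifted_mulVec_one]
      simp
    rw [hAv, dotProduct_smul] at h1
    have h2 := (smul_eq_zero.mp h1).resolve_left hneg.ne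
    simpa [dotProduct] using h2
  have := hc_min (hH.eigenvalues k + c) v hv0 hsum (by
    rw [shifted_mulVec_of_sum_eq_zero n P c v hsum] at hAv
    rw [add_smul, ← hAv]
    simp)
  linarith

lemma shifted_rank (n : ℕ) (hn : n ≠ 0) (P : Matrix (Fin n) (Fin n) ℝ) (c : ℝ) (m : ℕ)
    (hm : Module.finrank ℝ
      ↥(Module.End.eigenspace (Matrix.toLin' (LambdaForm n P)) c ⊓ sumZero n) = m) :
    (shiftedForm n P c).rank = n - m - 1 := by
  set K := Module.End.eigenspace (Matrix.toLin' (LambdaForm n P)) c ⊓ sumZero n with hK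
  set L : Submodule ℝ (Fin n → ℝ) := Submodule.span ℝ {fun _ => (1 : ℝ)} with hL
  have hn' : (n : ℝ) ≠ 0 := by exact_mod_cast hn
  have memK : ∀ x, x ∈ K ↔ (LambdaForm n P *ᵥ x = c • x ∧ ∑ i, x i = 0) := by
    intro x
    rw [hK, Submodule.mem_inf, Module.End.mem_eigenspace_iff]
    rfl
  have hker : LinearMap.ker (shiftedForm n P c).mulVecLin = K ⊔ L := by
    apply le_antisymm
    · intro x hx
      have hx : shiftedForm n P c *ᵥ x = 0 := by simpa using hx
      set a : ℝ := (n : ℝ)⁻¹ * ∑ i, x i with ha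
      have hsum : ∑ i, (x - a • (fun _ => (1 : ℝ)) : Fin n → ℝ) i = 0 := by
        simp [ha, Finset.sum_sub_distrib, hn']
      rw [Submodule.mem_sup]
      refine ⟨x - a • (fun _ => (1 : ℝ)), ?_, a • (fun _ => (1 : ℝ)),
        Submodule.smul_mem _ _ (Submodule.mem_span_singleton_self _), by simp⟩
      rw [memK]
      refine ⟨?_, hsum⟩
      have h := shifted_mulVec_of_sum_eq_zero n P c _ hsum
      rw [mulVec_sub, mulVec_smul, shifted_mulVec_one, hx] at h
      exact sub_eq_zero.mp (by rw [← h]; simp)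
    · apply sup_le
      · intro x hx
        obtain ⟨h1, h2⟩ := (memK x).mp hx
        simp [shifted_mulVec_of_sum_eq_zero n P c x h2, h1]
      · rw [hL, Submodule.span_singleton_le_iff_mem]
        simpa using shifted_mulVec_one n P c
  have hinf : K ⊓ L = ⊥ := by
    rw [eq_bot_iff]
    rintro x ⟨hxK, hxL⟩
    obtain ⟨a, rfl⟩ := Submodule.mem_span_singleton.mp hxL
    have := ((memK _).mp hxK).2
    have ha : a = 0 := by simpa [hn] using this
    simp [ha]
  have hLdim : Module.finrank ℝ L = 1 := by
    apply finrank_span_singleton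
    intro h
    simpa using congrFun h ⟨0, Nat.pos_of_ne_zero hn⟩
  have h1 := Submodule.finrank_sup_add_finrank_inf_eq K L
  have h2 := LinearMap.finrank_range_add_finrank_ker (shiftedForm n P c).mulVecLin
  rw [hinf, finrank_bot, hLdim, hm] at h1
  rw [hker] at h2
  have h3 : Module.finrank ℝ (Fin n → ℝ) = n := by simp
  rw [Matrix.rank]
  omega

/-! ### Distances and automorphism invariance -/

/-- The squared distance determined by the Gram matrix `shiftedForm n P c`. -/
lemma shifted_dist (n : ℕ) (P : Matrix (Fin n) (Fin n) ℝ) (hP : P.IsSymm)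
    (hPdiag : ∀ i, P i i = 0) (c : ℝ) (i j : Fin n) (hij : i ≠ j) :
    shiftedForm n P c i i + shiftedForm n P c j j - 2 * shiftedForm n P c i j
      = P i j - 2 * c := by
  have key : ∀ i j, shiftedForm n P c i j = -(1 / 2) * (P i j - (n : ℝ)⁻¹ * ∑ k, P i k
      - (n : ℝ)⁻¹ * (∑ k, P j k) + (n : ℝ)⁻¹ * (n : ℝ)⁻¹ * ∑ k, ∑ l, P k l)
      - c * ((1 : Matrix (Fin n) (Fin n) ℝ) i j - (n : ℝ)⁻¹) := by
    intro i j
    have hJP : (onesMatrix n * P) i j = ∑ k, P j k := by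
      simp [Matrix.mul_apply, onesMatrix, hP.apply]
    have hPJ : (P * onesMatrix n) i j = ∑ k, P i k := by
      simp [Matrix.mul_apply, onesMatrix]
    have hJPJ : (onesMatrix n * P * onesMatrix n) i j = ∑ k, ∑ l, P k l := by
      simp only [Matrix.mul_apply, onesMatrix, of_apply, one_mul, mul_one]
      exact Finset.sum_comm
    simp only [shiftedForm, LambdaForm, Matrix.sub_mul, Matrix.mul_sub, Matrix.one_mul,
      Matrix.mul_one, Matrix.smul_mul, Matrix.mul_smul, Matrix.sub_apply, Matrix.smul_apply,
      hJP, hPJ, hJPJ, smul_eq_mul]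
    simp only [onesMatrix, of_apply]
    ring
  simp only [key, hPdiag, Matrix.one_apply_eq, Matrix.one_apply_ne hij]
  ring

lemma shifted_perm (n : ℕ) (P : Matrix (Fin n) (Fin n) ℝ) (c : ℝ) (g : Equiv.Perm (Fin n))
    (hg : ∀ i j, P (g i) (g j) = P i j) (i j : Fin n) :
    shiftedForm n P c (g i) (g j) = shiftedForm n P c i j := by
  have hP : P.submatrix g g = P := by
    ext i j
    exact hg i j
  have hJ : (onesMatrix n).submatrix g g = onesMatrix n := rfl
  have hC : (1 - (n : ℝ)⁻¹ • onesMatrix n).submatrix g g = 1 - (n : ℝ)⁻¹ • onesMatrix n := by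
    rw [submatrix_sub, submatrix_smul]
    simp [hJ, submatrix_one_equiv]
  have h : (shiftedForm n P c).submatrix g g = shiftedForm n P c := by
    have hprod : ((1 - (n : ℝ)⁻¹ • onesMatrix n) * P * (1 - (n : ℝ)⁻¹ • onesMatrix n)).submatrix
        g g = (1 - (n : ℝ)⁻¹ • onesMatrix n) * P * (1 - (n : ℝ)⁻¹ • onesMatrix n) := by
      rw [← submatrix_mul_equiv _ _ _ g, ← submatrix_mul_equiv _ _ _ g, hC, hP]
    ext i j
    simp only [shiftedForm, LambdaForm, submatrix_apply, Matrix.sub_apply, Matrix.smul_apply]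
    have e1 := congrFun (congrFun hprod i) j
    have e2 := congrFun (congrFun hC i) j
    simp only [submatrix_apply, Matrix.sub_apply, Matrix.smul_apply] at e1 e2
    rw [e1, e2]
  exact congrFun (congrFun h i) j

/-! ### Spanning families with a given Gram matrix -/

open scoped MatrixOrder Matrix.Norms.L2Operator in
/-- A positive semidefinite matrix of rank `r` is the Gram matrix of a spanning family
of `ℝ^r`. -/
lemma exists_gram_vectors {n r : ℕ} (A : Matrix (Fin n) (Fin n) ℝ) (hA : A.PosSemidef)
    (hr : A.rank = r) :
    ∃ f : Fin n → EuclideanSpace ℝ (Fin r), (∀ i j, inner ℝ (f i) (f j) = A i j) ∧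
      Submodule.span ℝ (Set.range f) = ⊤ := by
  obtain ⟨B, hB⟩ : ∃ B : Matrix (Fin n) (Fin n) ℝ, A = Bᴴ * B :=
    CStarAlgebra.nonneg_iff_eq_star_mul_self.mp hA.nonneg
  -- The columns of `B`, for `A = Bᵀ B`, have Gram matrix `A`; their span `W` has dimension `r`.
  let u : Fin n → EuclideanSpace ℝ (Fin n) := fun j => WithLp.toLp 2 (B.col j)
  let W := Submodule.span ℝ (Set.range u)
  have hW : Module.finrank ℝ W = r := by
    rw [← hr, hB, Matrix.rank_conjTranspose_mul_self, Matrix.rank_eq_finrank_span_cols]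
    have : W = (Submodule.span ℝ (Set.range B.col)).map
        (WithLp.linearEquiv 2 ℝ (Fin n → ℝ)).symm.toLinearMap := by
      rw [Submodule.map_span, ← Set.range_comp]
      rfl
    rw [this]
    exact LinearEquiv.finrank_map_eq _ _
  let e : W ≃ₗᵢ[ℝ] EuclideanSpace ℝ (Fin r) :=
    (stdOrthonormalBasis ℝ W).repr.trans
      (LinearIsometryEquiv.piLpCongrLeft 2 ℝ ℝ (finCongr hW))
  let w : Fin n → W := fun i => ⟨u i, Submodule.subset_span ⟨i, rfl⟩⟩
  refine ⟨fun i => e (w i), ?_, ?_⟩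
  · intro i j
    rw [e.inner_map_map, Submodule.coe_inner, hB]
    simp [w, u, Matrix.mul_apply, PiLp.inner_apply, mul_comm]
  · have hw : Submodule.span ℝ (Set.range w) = ⊤ := by
      apply Submodule.map_injective_of_injective W.injective_subtype
      rw [Submodule.map_span, ← Set.range_comp, Submodule.map_top, Submodule.range_subtype]
      rfl
    have h2 : Set.range (fun i => e (w i)) = e.toLinearEquiv.toLinearMap '' Set.range w := by
      rw [← Set.range_comp]
      rfl
    rw [h2, ← Submodule.map_span, hw, Submodule.map_top]
    exact LinearEquiv.range _

/-- Equality of the Gram matrices of `f` and `f ∘ g` makes `f i ↦ f (g i)` extend to a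
linear isometry. -/
lemma exists_isometry_extending {n r : ℕ} (f : Fin n → EuclideanSpace ℝ (Fin r))
    (hspan : Submodule.span ℝ (Set.range f) = ⊤) (g : Equiv.Perm (Fin n))
    (hg : ∀ i j, inner ℝ (f (g i)) (f (g j)) = inner ℝ (f i) (f j)) :
    ∃ φ : EuclideanSpace ℝ (Fin r) ≃ᵢ EuclideanSpace ℝ (Fin r), ∀ i, φ (f i) = f (g i) := by
  let T : (Fin n → ℝ) →ₗ[ℝ] EuclideanSpace ℝ (Fin r) := Fintype.linearCombination ℝ f
  let Tg : (Fin n → ℝ) →ₗ[ℝ] EuclideanSpace ℝ (Fin r) :=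
    Fintype.linearCombination ℝ (fun i => f (g i))
  have hnorm : ∀ x, ‖Tg x‖ = ‖T x‖ := by
    intro x
    have : ‖Tg x‖ ^ 2 = ‖T x‖ ^ 2 := by
      rw [← real_inner_self_eq_norm_sq, ← real_inner_self_eq_norm_sq]
      simp only [T, Tg, Fintype.linearCombination_apply, sum_inner, inner_sum, inner_smul_left,
        inner_smul_right, hg]
    exact (pow_left_inj₀ (norm_nonneg _) (norm_nonneg _) two_ne_zero).mp this
  have hT : LinearMap.range T = ⊤ := by
    rw [Fintype.range_linearCombination, hspan]
  obtain ⟨S, hS⟩ := T.exists_rightInverse_of_surjective hT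
  have hTS : ∀ y, T (S y) = y := fun y => LinearMap.congr_fun hS y
  let L : EuclideanSpace ℝ (Fin r) →ₗᵢ[ℝ] EuclideanSpace ℝ (Fin r) :=
    ⟨Tg ∘ₗ S, fun y => by simp [hnorm, hTS]⟩
  refine ⟨(L.toLinearIsometryEquiv rfl).toIsometryEquiv, fun i => ?_⟩
  have h1 : T (Pi.single i 1) = f i := by simp [T]
  have h2 : Tg (Pi.single i 1) = f (g i) := by simp [Tg]
  have h3 : ‖Tg (S (f i) - Pi.single i 1)‖ = 0 := by
    rw [hnorm, map_sub, hTS, h1, sub_self, norm_zero]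
  rw [norm_eq_zero, map_sub, h2, sub_eq_zero] at h3
  exact h3

/-- A point is determined by its distances to a spanning family with sum zero: summing the
squared distances recovers its norm, and then its inner products with the family. -/
lemma eq_of_dist_eq {n r : ℕ} (hn : n ≠ 0) (f : Fin n → EuclideanSpace ℝ (Fin r))
    (hspan : Submodule.span ℝ (Set.range f) = ⊤) (hsum : ∑ i, f i = 0)
    (x y : EuclideanSpace ℝ (Fin r)) (h : ∀ i, dist x (f i) = dist y (f i)) : x = y := by
  have h1 : ∀ i, ‖x‖ ^ 2 - 2 * inner ℝ x (f i) = ‖y‖ ^ 2 - 2 * inner ℝ y (f i) := by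
    intro i
    have := congrArg (· ^ 2) (h i)
    simp only [dist_eq_norm, norm_sub_sq_real] at this
    linarith
  have hz : ∀ z : EuclideanSpace ℝ (Fin r), ∑ i, inner ℝ z (f i) = 0 := by
    intro z
    rw [← inner_sum, hsum, inner_zero_right]
  have h2 : ‖x‖ ^ 2 = ‖y‖ ^ 2 := by
    have := Finset.sum_congr (rfl : (Finset.univ : Finset (Fin n)) = Finset.univ)
      (fun i _ => h1 i)
    simpa [Finset.sum_sub_distrib, ← Finset.mul_sum, hz, hn] using this
  have h3 : ∀ z ∈ Submodule.span ℝ (Set.range f), inner ℝ (x - y) z = 0 := by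
    intro z hzm
    induction hzm using Submodule.span_induction with
    | mem z hz =>
      obtain ⟨i, rfl⟩ := hz
      rw [inner_sub_left]
      linarith [h1 i]
    | zero => simp
    | add a b _ _ ha hb => rw [inner_add_right, ha, hb, add_zero]
    | smul a b _ hb => rw [inner_smul_right, hb, mul_zero]
  have h4 := h3 (x - y) (by rw [hspan]; trivial)
  exact sub_eq_zero.mp (inner_self_eq_zero.mp h4)

/-! ### The permutation induced by a symmetry of the point set -/

/-- The permutation of the indices induced by an isometry that preserves the image of an
injective family. -/
noncomputable def permOfIsom {n r : ℕ} (f : Fin n → EuclideanSpace ℝ (Fin r))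
    (hf : Function.Injective f) (φ : isomPreserving r (Set.range f)) : Equiv.Perm (Fin n) :=
  (Equiv.ofInjective f hf).trans
    (((φ.1.toEquiv.image (Set.range f)).trans (Equiv.setCongr φ.2)).trans
      (Equiv.ofInjective f hf).symm)

lemma apply_permOfIsom {n r : ℕ} (f : Fin n → EuclideanSpace ℝ (Fin r))
    (hf : Function.Injective f) (φ : isomPreserving r (Set.range f)) (i : Fin n) :
    f (permOfIsom f hf φ i) = φ.1 (f i) :=
  Equiv.apply_ofInjective_symm hf _

/-- `permOfIsom` as a group homomorphism. -/
noncomputable def inducedPerm {n r : ℕ} (f : Fin n → EuclideanSpace ℝ (Fin r))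
    (hf : Function.Injective f) :
    isomPreserving r (Set.range f) →* Equiv.Perm (Fin n) where
  toFun := permOfIsom f hf
  map_one' := Equiv.ext fun i => hf (apply_permOfIsom f hf 1 i)
  map_mul' a b := Equiv.ext fun i => hf <| by
    rw [Equiv.Perm.mul_apply, apply_permOfIsom f hf, apply_permOfIsom f hf,
      apply_permOfIsom f hf]
    rfl

lemma apply_inducedPerm {n r : ℕ} (f : Fin n → EuclideanSpace ℝ (Fin r))
    (hf : Function.Injective f) (φ : isomPreserving r (Set.range f)) (i : Fin n) :
    f (inducedPerm f hf φ i) = φ.1 (f i) :=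
  apply_permOfIsom f hf φ i

/-! ### The regular embedding -/

/-- For an irreducible loopless multigraph `G`, any commuting
reconstructing predistance matrix `P` defines a regular embedding of `G` into
`ℝ^{ζ(P)}`, where `ζ(P) = n - m - 1` and `m` is the multiplicity of the smallest
eigenvalue of `Λ(P)` restricted to the hyperplane `𝟙^⊥`. -/
theorem commuting_reconstructing_predistance_gives_regular_embedding
    (n : ℕ) (μ : Fin n → Fin n → ℕ)
    (hsymm : ∀ i j, μ i j = μ j i) (hloop : ∀ i, μ i i = 0)
    (hirr : ¬ ∃ x y : Fin n, x ≠ y ∧ ∀ v : Fin n, v ≠ x → v ≠ y → μ x v = μ y v)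
    (P : Matrix (Fin n) (Fin n) ℝ) (hPsymm : P.IsSymm) (hPdiag : ∀ i, P i i = 0)
    (hPcomm : ∀ g ∈ mgAut n μ, ∀ i j : Fin n, P (g i) (g j) = P i j)
    (hPrec : ∃ Ξ : ℝ → ℕ, ∀ i j : Fin n, i ≠ j → μ i j = Ξ (P i j))
    (c : ℝ) (m : ℕ)
    (hc_eig : ∃ v : Fin n → ℝ, v ≠ 0 ∧ (∑ i, v i) = 0 ∧
      (LambdaForm n P).mulVec v = c • v)
    (hc_min : ∀ (lam : ℝ) (v : Fin n → ℝ), v ≠ 0 → (∑ i, v i) = 0 →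
      (LambdaForm n P).mulVec v = lam • v → c ≤ lam)
    (hm : Module.finrank ℝ
      ↥(Module.End.eigenspace (Matrix.toLin' (LambdaForm n P)) c ⊓ sumZero n) = m) :
    ∃ f : Fin n → EuclideanSpace ℝ (Fin (n - m - 1)),
      Nonempty (mgAut n μ ≃* isomPreserving (n - m - 1) (Set.range f)) := by
  obtain ⟨Ξ, hΞ⟩ := hPrec
  have hn : n ≠ 0 := by
    rintro rfl
    obtain ⟨v, hv, -⟩ := hc_eig
    exact hv (Subsingleton.elim _ _)
  obtain ⟨f, hgram, hspan⟩ := exists_gram_vectors (shiftedForm n P c)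
    (shifted_posSemidef n P hPsymm c hc_min) (shifted_rank n hn P c m hm)
  have hsum : ∑ i, f i = 0 := by
    rw [← inner_self_eq_zero (𝕜 := ℝ)]
    simp only [inner_sum, sum_inner, hgram]
    apply Finset.sum_eq_zero
    intro i _
    have h := congrFun (shifted_mulVec_one n P c) i
    rw [← shifted_transpose n P hPsymm c] at h
    simpa [mulVec, dotProduct] using h
  have hdist : ∀ i j, i ≠ j → dist (f i) (f j) ^ 2 = P i j - 2 * c := by
    intro i j hij
    rw [← shifted_dist n P hPsymm hPdiag c i j hij, dist_eq_norm, norm_sub_sq_real,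
      ← real_inner_self_eq_norm_sq, ← real_inner_self_eq_norm_sq]
    simp only [hgram]
    ring
  have hinj : Function.Injective f := by
    intro x y hxy
    by_contra hne
    refine hirr ⟨x, y, hne, fun v hvx hvy => ?_⟩
    have h1 := hdist x v hvx.symm
    have h2 := hdist y v hvy.symm
    rw [hxy, h2] at h1
    rw [hΞ x v hvx.symm, hΞ y v hvy.symm, show P x v = P y v by linarith]
  refine ⟨f, ⟨(MulEquiv.ofBijective
    ((inducedPerm f hinj).codRestrict (mgAut n μ) ?_) ⟨?_, ?_⟩).symm⟩⟩
  · intro φ i j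
    set g := inducedPerm f hinj φ with hg
    by_cases hij : i = j
    · rw [hij, hloop, hloop]
    · have hgij : g i ≠ g j := fun h => hij (g.injective h)
      have h1 := hdist _ _ hgij
      rw [hg, apply_inducedPerm f hinj, apply_inducedPerm f hinj, φ.1.isometry.dist_eq, hdist i j hij,
        ← hg] at h1
      rw [hΞ _ _ hgij, hΞ _ _ hij, show P (g i) (g j) = P i j by linarith]
  · intro φ ψ h
    have h' : inducedPerm f hinj φ = inducedPerm f hinj ψ := congrArg Subtype.val h
    apply Subtype.ext
    ext1 y
    refine eq_of_dist_eq hn f hspan hsum _ _ fun j => ?_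
    obtain ⟨i, rfl⟩ := (inducedPerm f hinj φ).surjective j
    conv_rhs => rw [h']
    rw [apply_inducedPerm f hinj, apply_inducedPerm f hinj, φ.1.isometry.dist_eq, ψ.1.isometry.dist_eq]
  · rintro ⟨g, hg⟩
    obtain ⟨φ, hφ⟩ := exists_isometry_extending f hspan g fun i j => by
      rw [hgram, hgram, shifted_perm n P c g (hPcomm g hg)]
    have hmem : φ ∈ isomPreserving (n - m - 1) (Set.range f) := by
      change φ '' Set.range f = Set.range f
      rw [← Set.range_comp, show φ ∘ f = f ∘ g from funext hφ, g.surjective.range_comp]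
    refine ⟨⟨φ, hmem⟩, Subtype.ext (Equiv.ext fun i => hinj ?_)⟩
    exact (apply_inducedPerm f hinj ⟨φ, hmem⟩ i).trans (hφ i)
end

section
/- Every irreducible (twin-free) loopless multigraph G has a regular embedding into some Euclidean space: there exist k and a map f : V(G) → EuclideanSpace ℝ (Fin k) such that Aut(G) is isomorphic to the group of isometric bijections of EuclideanSpace ℝ (Fin k) mapping the set f(V(G)) onto itself. -/
open scoped RealInnerProductSpace

/-- The group-theoretic part: points `f i` whose distances determine the multiplicities,
on which isometries are determined, and to which automorphisms extend. -/
lemma mulEquiv_of_rigid (n : ℕ) (μ : Fin n → Fin n → ℕ) (hloop : ∀ i, μ i i = 0) (k : ℕ)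
    (f : Fin n → EuclideanSpace ℝ (Fin k)) (hinj : Function.Injective f)
    (huniq : ∀ φ ψ : EuclideanSpace ℝ (Fin k) ≃ᵢ EuclideanSpace ℝ (Fin k),
      (∀ i, φ (f i) = ψ (f i)) → φ = ψ)
    (hdist : ∀ i j i' j', i ≠ j → i' ≠ j' → dist (f i) (f j) = dist (f i') (f j') →
      μ i j = μ i' j')
    (hext : ∀ g ∈ mgAut n μ, ∃ φ : EuclideanSpace ℝ (Fin k) ≃ᵢ EuclideanSpace ℝ (Fin k),
      ∀ i, φ (f i) = f (g i)) :
    Nonempty (mgAut n μ ≃* isomPreserving k (Set.range f)) := by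
  choose! Φ hΦ using hext
  have hmem : ∀ g : mgAut n μ, Φ g ∈ isomPreserving k (Set.range f) := by
    intro g
    change Φ g '' Set.range f = Set.range f
    ext x
    constructor
    · rintro ⟨_, ⟨i, rfl⟩, rfl⟩
      exact ⟨_, (hΦ g g.2 i).symm⟩
    · rintro ⟨i, rfl⟩
      refine ⟨f ((g : Equiv.Perm (Fin n)).symm i), ⟨_, rfl⟩, ?_⟩
      rw [hΦ g g.2, Equiv.apply_symm_apply]
  let Ψ : mgAut n μ →* isomPreserving k (Set.range f) :=
    MonoidHom.mk' (fun g => ⟨Φ g, hmem g⟩) (by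
      intro g h
      apply Subtype.ext
      apply huniq
      intro i
      change Φ (g * h : mgAut n μ) (f i) = Φ g (Φ h (f i))
      rw [hΦ _ (g * h).2, hΦ h h.2, hΦ g g.2]
      rfl)
  refine ⟨MulEquiv.ofBijective Ψ ⟨?_, ?_⟩⟩
  · intro g h hgh
    apply Subtype.ext
    ext1 i
    apply hinj
    rw [← hΦ g g.2, ← hΦ h h.2]
    have : Φ g = Φ h := congrArg Subtype.val hgh
    rw [this]
  · rintro ⟨φ, hφ⟩
    have h1 : ∀ i, ∃ j, f j = φ (f i) := by
      intro i
      have : φ (f i) ∈ φ '' Set.range f := ⟨_, ⟨i, rfl⟩, rfl⟩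
      have h2 : φ '' Set.range f = Set.range f := hφ
      rwa [h2] at this
    choose g hg using h1
    have ginj : Function.Injective g := by
      intro i j hij
      apply hinj
      apply φ.injective
      rw [← hg, ← hg, hij]
    let G : Equiv.Perm (Fin n) := Equiv.ofBijective g (Finite.injective_iff_bijective.1 ginj)
    have hG : G ∈ mgAut n μ := by
      intro i j
      change μ (g i) (g j) = μ i j
      by_cases hij : i = j
      · subst hij
        rw [hloop, hloop]
      · apply hdist _ _ _ _ (fun h => hij (ginj h)) hij
        rw [hg, hg, φ.isometry.dist_eq]
    refine ⟨⟨G, hG⟩, ?_⟩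
    apply Subtype.ext
    apply huniq
    intro i
    change Φ G (f i) = φ (f i)
    rw [hΦ G hG, ← hg]
    rfl

/-- Isometries of an inner product space are determined by their values on a spanning family with
centroid `0`: averaging the equations `‖x - p i‖² = ‖y - p i‖²` over `i` gives `‖x‖ = ‖y‖`, and then each of
them says `x - y ⟂ p i`. -/
lemma isometry_ext {n : ℕ} {E : Type*} [NormedAddCommGroup E] [InnerProductSpace ℝ E]
    (p : Fin n → E) (hsum : ∑ i, p i = 0) (hspan : Submodule.span ℝ (Set.range p) = ⊤)
    (φ ψ : E ≃ᵢ E) (h : ∀ i, φ (p i) = ψ (p i)) : φ = ψ := by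
  ext y
  set x := φ.symm (ψ y) with hx
  suffices hxy : x = y by
    rw [← hxy, hx, IsometryEquiv.apply_symm_apply, ← hx, hxy]
  have hd : ∀ i, ‖x - p i‖ ^ 2 = ‖y - p i‖ ^ 2 := by
    intro i
    rw [← dist_eq_norm, ← dist_eq_norm, ← φ.isometry.dist_eq, ← ψ.isometry.dist_eq y, h, hx,
      IsometryEquiv.apply_symm_apply]
  have hd' : ∀ i, ‖x‖ ^ 2 - ‖y‖ ^ 2 = 2 * ⟪x - y, p i⟫ := by
    intro i
    have := hd i
    rw [norm_sub_sq_real, norm_sub_sq_real] at this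
    rw [inner_sub_left]
    linarith
  have horth : ∀ i, ⟪x - y, p i⟫ = 0 := by
    intro i
    have h0 : ∑ _j : Fin n, (‖x‖ ^ 2 - ‖y‖ ^ 2) = 0 := by
      rw [Finset.sum_congr rfl (fun j _ => hd' j), ← Finset.mul_sum, ← inner_sum, hsum,
        inner_zero_right, mul_zero]
    rw [Finset.sum_const, Finset.card_univ, Fintype.card_fin, nsmul_eq_mul] at h0
    have hn : (n : ℝ) ≠ 0 := by
      have := i.pos
      positivity
    have h1 := (mul_eq_zero.1 h0).resolve_left hn
    have := hd' i
    linarith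
  have hall : x - y ∈ (Submodule.span ℝ (Set.range p))ᗮ := by
    rw [Submodule.mem_orthogonal']
    intro u hu
    induction hu using Submodule.span_induction with
    | mem u hu =>
      obtain ⟨i, rfl⟩ := hu
      exact horth i
    | zero => exact inner_zero_right _
    | add u v _ _ hu hv => rw [inner_add_right, hu, hv, add_zero]
    | smul a u _ hu => rw [inner_smul_right, hu, mul_zero]
  rw [hspan, Submodule.top_orthogonal_eq_bot, Submodule.mem_bot] at hall
  exact sub_eq_zero.1 hall

/-- A linear isometry permuting the points `p i` restricts to their span. -/
lemma exists_isometry_span {n : ℕ} {E : Type*} [NormedAddCommGroup E] [InnerProductSpace ℝ E]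
    (p : Fin n → E) (L : E ≃ₗᵢ[ℝ] E) (g : Equiv.Perm (Fin n)) (hL : ∀ i, L (p i) = p (g i)) :
    ∃ φ : Submodule.span ℝ (Set.range p) ≃ᵢ Submodule.span ℝ (Set.range p),
      ∀ x, ((φ x : Submodule.span ℝ (Set.range p)) : E) = L x := by
  have hmap : (Submodule.span ℝ (Set.range p)).map (L.toLinearEquiv : E →ₗ[ℝ] E) =
      Submodule.span ℝ (Set.range p) := by
    rw [Submodule.map_span]
    congr 1
    ext x
    constructor
    · rintro ⟨_, ⟨i, rfl⟩, rfl⟩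
      exact ⟨g i, (hL i).symm⟩
    · rintro ⟨i, rfl⟩
      refine ⟨p (g.symm i), ⟨_, rfl⟩, ?_⟩
      change L _ = _
      rw [hL, Equiv.apply_symm_apply]
  have hiff : ∀ a, a ∈ Submodule.span ℝ (Set.range p) ↔
      L a ∈ Submodule.span ℝ (Set.range p) := by
    intro a
    conv_rhs => rw [← hmap]
    constructor
    · exact fun ha => ⟨a, ha, rfl⟩
    · rintro ⟨a', ha', h⟩
      rwa [← L.injective h]
  refine ⟨⟨L.toEquiv.subtypeEquiv hiff, ?_⟩, fun x => rfl⟩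
  exact Isometry.of_dist_eq fun x y => L.isometry.dist_eq x y

section Points

variable (n : ℕ) (μ : Fin n → Fin n → ℕ)

/-- Total multiplicity of the ordered pairs meeting the vertex `i`, i.e. twice its degree. -/
def vtxWeight (i : Fin n) : ℝ :=
  ∑ e : Fin n × Fin n, if i = e.1 ∨ i = e.2 then (μ e.1 e.2 : ℝ) else 0

/-- The common squared norm of the points `vtx`, large enough to dominate all `vtxWeight`s
and all `2 μ i j`. -/
def sqNorm : ℝ := 2 * ∑ e : Fin n × Fin n, (μ e.1 e.2 : ℝ) + 1

/-- The weighted incidence vector of the vertex `i`.  The coordinates `Sum.inr (u, v)` record the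
edges at `i`, and the coordinate `Sum.inl i` adjusts the squared norm to `sqNorm`. -/
noncomputable def vtx (i : Fin n) : EuclideanSpace ℝ (Fin n ⊕ Fin n × Fin n) :=
  WithLp.toLp 2 (Sum.elim
    (fun u => if u = i then √(sqNorm n μ - vtxWeight n μ i) else 0)
    (fun e => if i = e.1 ∨ i = e.2 then √(μ e.1 e.2) else 0))

lemma vtxWeight_le (i : Fin n) : vtxWeight n μ i ≤ sqNorm n μ := by
  have h1 : vtxWeight n μ i ≤ ∑ e : Fin n × Fin n, (μ e.1 e.2 : ℝ) := by
    apply Finset.sum_le_sum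
    intro e _
    split_ifs
    · exact le_rfl
    · positivity
  have h2 : 0 ≤ ∑ e : Fin n × Fin n, (μ e.1 e.2 : ℝ) := by positivity
  unfold sqNorm
  linarith

lemma two_mul_lt_sqNorm (i j : Fin n) : 2 * (μ i j : ℝ) < sqNorm n μ := by
  have h := Finset.single_le_sum (f := fun e : Fin n × Fin n => (μ e.1 e.2 : ℝ))
    (fun e _ => by positivity) (Finset.mem_univ (i, j))
  simp only at h
  unfold sqNorm
  linarith

lemma inner_vtx_self (i : Fin n) : ⟪vtx n μ i, vtx n μ i⟫ = sqNorm n μ := by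
  have h : ∀ e : Fin n × Fin n,
      (if i = e.1 ∨ i = e.2 then √(μ e.1 e.2 : ℝ) else 0) *
        (if i = e.1 ∨ i = e.2 then √(μ e.1 e.2 : ℝ) else 0) =
      if i = e.1 ∨ i = e.2 then (μ e.1 e.2 : ℝ) else 0 := by
    intro e
    split_ifs
    · exact Real.mul_self_sqrt (by positivity)
    · simp
  rw [PiLp.inner_apply, Fintype.sum_sum_type]
  simp only [vtx, Sum.elim_inl, Sum.elim_inr, RCLike.inner_apply, conj_trivial, h]
  have h2 := Real.mul_self_sqrt (sub_nonneg.2 (vtxWeight_le n μ i))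
  simp only [mul_ite, mul_zero, Finset.sum_ite_eq', Finset.mem_univ, if_true, ite_mul, zero_mul,
    ← ite_and, and_self, h2]
  change sqNorm n μ - vtxWeight n μ i + vtxWeight n μ i = _
  ring

lemma inner_vtx_ne (hsymm : ∀ i j, μ i j = μ j i) {i j : Fin n} (hij : i ≠ j) :
    ⟪vtx n μ i, vtx n μ j⟫ = 2 * μ i j := by
  have h1 : ∀ u : Fin n, (if u = j then √(sqNorm n μ - vtxWeight n μ j) else 0) *
      (if u = i then √(sqNorm n μ - vtxWeight n μ i) else 0) = 0 := by
    intro u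
    by_cases h : u = i
    · simp [h, hij]
    · simp [h]
  -- Only the two ordered pairs `(i, j)` and `(j, i)` meet both `i` and `j`.
  have h2 : ∀ e : Fin n × Fin n,
      (if j = e.1 ∨ j = e.2 then √(μ e.1 e.2 : ℝ) else 0) *
        (if i = e.1 ∨ i = e.2 then √(μ e.1 e.2 : ℝ) else 0) =
      (if e = (i, j) then (μ i j : ℝ) else 0) + (if e = (j, i) then (μ i j : ℝ) else 0) := by
    rintro ⟨u, v⟩
    have hs : √(μ u v : ℝ) * √(μ u v : ℝ) = μ u v := Real.mul_self_sqrt (by positivity)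
    have := hsymm i j
    simp only [Prod.mk.injEq]
    split_ifs <;> grind
  rw [PiLp.inner_apply, Fintype.sum_sum_type]
  simp only [vtx, Sum.elim_inl, Sum.elim_inr, RCLike.inner_apply, conj_trivial, h1, h2]
  rw [Finset.sum_add_distrib]
  simp
  ring

lemma dist_sq_vtx (hsymm : ∀ i j, μ i j = μ j i) {i j : Fin n} (hij : i ≠ j) :
    dist (vtx n μ i) (vtx n μ j) ^ 2 = 2 * sqNorm n μ - 4 * μ i j := by
  rw [dist_eq_norm, norm_sub_sq_real, ← real_inner_self_eq_norm_sq, ← real_inner_self_eq_norm_sq,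
    inner_vtx_self, inner_vtx_self, inner_vtx_ne n μ hsymm hij]
  ring

lemma vtxWeight_aut {g : Equiv.Perm (Fin n)} (hg : g ∈ mgAut n μ) (i : Fin n) :
    vtxWeight n μ (g i) = vtxWeight n μ i := by
  unfold vtxWeight
  rw [← Equiv.sum_comp (Equiv.prodCongr g g)]
  apply Finset.sum_congr rfl
  intro e _
  have : μ (g e.1) (g e.2) = μ e.1 e.2 := hg _ _
  simp [this]

lemma exists_linearIsometry {g : Equiv.Perm (Fin n)} (hg : g ∈ mgAut n μ) :
    ∃ L : EuclideanSpace ℝ (Fin n ⊕ Fin n × Fin n) ≃ₗᵢ[ℝ]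
      EuclideanSpace ℝ (Fin n ⊕ Fin n × Fin n), ∀ i, L (vtx n μ i) = vtx n μ (g i) := by
  refine ⟨LinearIsometryEquiv.piLpCongrLeft 2 ℝ ℝ (Equiv.sumCongr g (Equiv.prodCongr g g)), ?_⟩
  intro i
  ext e
  rw [LinearIsometryEquiv.piLpCongrLeft_apply]
  obtain ⟨e, rfl⟩ := (Equiv.sumCongr g (Equiv.prodCongr g g)).surjective e
  rcases e with u | ⟨u, v⟩
  · simp [vtx, Equiv.piCongrLeft', vtxWeight_aut n μ hg]
  · have : μ (g u) (g v) = μ u v := hg _ _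
    simp [vtx, Equiv.piCongrLeft', this]

end Points

/-- Every irreducible (twin-free) loopless multigraph has a regular
embedding into some Euclidean space. -/
theorem irreducible_multigraph_has_regular_embedding (n : ℕ) (μ : Fin n → Fin n → ℕ)
    (hsymm : ∀ i j, μ i j = μ j i) (hloop : ∀ i, μ i i = 0)
    (hirr : ¬ ∃ x y : Fin n, x ≠ y ∧ ∀ v : Fin n, v ≠ x → v ≠ y → μ x v = μ y v) :
    ∃ (k : ℕ) (f : Fin n → EuclideanSpace ℝ (Fin k)),
      Nonempty (mgAut n μ ≃* isomPreserving k (Set.range f)) := by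
  let m := (n : ℝ)⁻¹ • ∑ i, vtx n μ i
  let p := fun i => vtx n μ i - m
  let W := Submodule.span ℝ (Set.range p)
  let w : Fin n → W := fun i => ⟨p i, Submodule.subset_span ⟨i, rfl⟩⟩
  let T := (stdOrthonormalBasis ℝ W).repr
  have hdist : ∀ i j, dist (T (w i)) (T (w j)) = dist (vtx n μ i) (vtx n μ j) := by
    intro i j
    rw [T.isometry.dist_eq]
    exact dist_sub_right _ _ m
  have hsum : ∑ i, p i = 0 := by
    rcases Nat.eq_zero_or_pos n with rfl | hn
    · simp
    · have : (n : ℝ) ≠ 0 := by positivity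
      simp only [p, Finset.sum_sub_distrib, Finset.sum_const, Finset.card_univ, Fintype.card_fin]
      rw [← Nat.cast_smul_eq_nsmul ℝ, smul_smul, mul_inv_cancel₀ this, one_smul, sub_self]
  have hwsum : ∑ i, w i = 0 := by
    apply Subtype.ext
    rw [Submodule.coe_sum]
    exact hsum
  have hwspan : Submodule.span ℝ (Set.range w) = ⊤ := by
    apply Submodule.map_injective_of_injective W.injective_subtype
    rw [Submodule.map_span, Submodule.map_top, Submodule.range_subtype, ← Set.range_comp]
    rfl
  refine ⟨Module.finrank ℝ W, fun i => T (w i), mulEquiv_of_rigid n μ hloop _ _ ?_ ?_ ?_ ?_⟩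
  · intro i j hij
    by_contra hne
    have h0 : dist (vtx n μ i) (vtx n μ j) = 0 := by
      rw [← hdist]
      exact dist_eq_zero.2 hij
    have h1 := dist_sq_vtx n μ hsymm hne
    have h2 := two_mul_lt_sqNorm n μ i j
    rw [h0] at h1
    linarith
  · intro φ ψ h
    refine isometry_ext (fun i => T (w i)) ?_ ?_ φ ψ h
    · rw [← map_sum, hwsum, map_zero]
    · have : Set.range (fun i => T (w i)) = (T.toLinearEquiv : W →ₗ[ℝ] _) '' Set.range w :=
        Set.range_comp T w
      rw [this, ← Submodule.map_span, hwspan, Submodule.map_top]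
      exact LinearEquiv.range T.toLinearEquiv
  · intro i j i' j' hij hij' h
    rw [hdist, hdist] at h
    have h1 := dist_sq_vtx n μ hsymm hij
    rw [h, dist_sq_vtx n μ hsymm hij'] at h1
    have : (μ i j : ℝ) = μ i' j' := by linarith
    exact_mod_cast this
  · intro g hg
    obtain ⟨L, hL⟩ := exists_linearIsometry n μ hg
    have hm : L m = m := by
      simp only [m, map_smul, map_sum, hL]
      rw [Equiv.sum_comp g (vtx n μ)]
    have hp : ∀ i, L (p i) = p (g i) := by
      intro i
      simp only [p, map_sub, hL, hm]
    obtain ⟨φ, hφ⟩ := exists_isometry_span p L g hp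
    refine ⟨(T.toIsometryEquiv.symm.trans φ).trans T.toIsometryEquiv, fun i => ?_⟩
    change T (φ (T.symm (T (w i)))) = T (w (g i))
    rw [T.symm_apply_apply]
    congr 1
    apply Subtype.ext
    rw [hφ]
    exact hp i
end

section
/- Let G be a connected irreducible (twin-free) d-regular loopless multigraph on Fin n whose adjacency matrix A (with A i j = μ i j) has exactly s distinct eigenvalues λ_1 > λ_2 > ⋯ > λ_s, with corresponding eigenspaces E_1, …, E_s. Then there is an injective group homomorphism from Aut(G) into the product, over i = 2, …, s−1, of the groups of linear isometries of the eigenspaces E_i (i.e. Aut(G) is isomorphic to a subgroup of O(E_2) × ⋯ × O(E_{s−1})). -/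
/-- The permutation operator of `g` on `ℝⁿ`: `(permAct g x) i = x (g⁻¹ i)`, so that
`permAct g` sends the basis vector `e_k` to `e_{g k}`. -/
noncomputable def permAct {n : ℕ} (g : Equiv.Perm (Fin n)) :
    EuclideanSpace ℝ (Fin n) ≃ₗᵢ[ℝ] EuclideanSpace ℝ (Fin n) :=
  LinearIsometryEquiv.piLpCongrLeft 2 ℝ ℝ g

lemma permAct_apply {n : ℕ} (g : Equiv.Perm (Fin n)) (x : EuclideanSpace ℝ (Fin n)) (i : Fin n) :
    permAct g x i = x (g.symm i) := rfl

lemma permAct_one {n : ℕ} (x : EuclideanSpace ℝ (Fin n)) : permAct 1 x = x := rfl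

lemma permAct_mul {n : ℕ} (g h : Equiv.Perm (Fin n)) (x : EuclideanSpace ℝ (Fin n)) :
    permAct (g * h) x = permAct g (permAct h x) := rfl

lemma toEuclideanLin_coord {n : ℕ} (A : Matrix (Fin n) (Fin n) ℝ)
    (x : EuclideanSpace ℝ (Fin n)) (i : Fin n) :
    Matrix.toEuclideanLin A x i = ∑ j, A i j * x j := rfl

lemma toEuclideanLin_permAct {n : ℕ} {μ : Fin n → Fin n → ℕ} {A : Matrix (Fin n) (Fin n) ℝ}
    (hA : ∀ i j, A i j = (μ i j : ℝ)) {g : Equiv.Perm (Fin n)} (hg : g ∈ mgAut n μ)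
    (x : EuclideanSpace ℝ (Fin n)) :
    Matrix.toEuclideanLin A (permAct g x) = permAct g (Matrix.toEuclideanLin A x) := by
  ext i
  rw [permAct_apply, toEuclideanLin_coord, toEuclideanLin_coord, ← Equiv.sum_comp g]
  refine Finset.sum_congr rfl fun j _ => ?_
  have h : μ (g (g.symm i)) (g j) = μ (g.symm i) j := hg _ _
  rw [Equiv.apply_symm_apply] at h
  rw [permAct_apply, Equiv.symm_apply_apply, hA, hA, h]

lemma permAct_mem_eigenspace {n : ℕ} {μ : Fin n → Fin n → ℕ} {A : Matrix (Fin n) (Fin n) ℝ}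
    (hA : ∀ i j, A i j = (μ i j : ℝ)) {g : Equiv.Perm (Fin n)} (hg : g ∈ mgAut n μ) {c : ℝ}
    {x : EuclideanSpace ℝ (Fin n)} (hx : x ∈ Module.End.eigenspace (Matrix.toEuclideanLin A) c) :
    permAct g x ∈ Module.End.eigenspace (Matrix.toEuclideanLin A) c := by
  rw [Module.End.mem_eigenspace_iff] at hx ⊢
  rw [toEuclideanLin_permAct hA hg, hx, map_smul]

/-- The action of a subgroup `H` of permutations on an `H`-invariant subspace of `ℝⁿ`. -/
noncomputable def permActOn {n : ℕ} (H : Subgroup (Equiv.Perm (Fin n)))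
    (F : Submodule ℝ (EuclideanSpace ℝ (Fin n))) (hF : ∀ g ∈ H, ∀ x ∈ F, permAct g x ∈ F) :
    H →* (F ≃ₗᵢ[ℝ] F) where
  toFun g :=
    { toFun := fun x => ⟨permAct g.1 x.1, hF _ g.2 _ x.2⟩
      invFun := fun x => ⟨permAct g.1⁻¹ x.1, hF _ (H.inv_mem g.2) _ x.2⟩
      map_add' := fun x y => Subtype.ext (map_add (permAct g.1) x.1 y.1)
      map_smul' := fun c x => Subtype.ext (map_smul (permAct g.1) c x.1)
      left_inv := fun x => Subtype.ext (by
        simp only [← permAct_mul, inv_mul_cancel, permAct_one])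
      right_inv := fun x => Subtype.ext (by
        simp only [← permAct_mul, mul_inv_cancel, permAct_one])
      norm_map' := fun x => (permAct g.1).norm_map x.1 }
  map_one' := rfl
  map_mul' _ _ := rfl

/-- An eigenvector of a connected `d`-regular multigraph whose eigenvalue is at least `d` is
constant: `∑ μ i j (x i - x j)² = 2 (d - c) ‖x‖² ≤ 0`, so `x` agrees along every edge. -/
lemma eigenvector_const {n : ℕ} {μ : Fin n → Fin n → ℕ} (hsymm : ∀ i j, μ i j = μ j i)
    (hconn : ∀ i j : Fin n, Relation.ReflTransGen (fun a b => 0 < μ a b) i j)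
    {d : ℕ} (hreg : ∀ i, ∑ j, μ i j = d) {c : ℝ} (hc : (d : ℝ) ≤ c) {x : Fin n → ℝ}
    (hx : ∀ i, ∑ j, (μ i j : ℝ) * x j = c * x i) (i j : Fin n) : x i = x j := by
  have hreg' : ∀ i, ∑ j, (μ i j : ℝ) = d := fun i => by exact_mod_cast hreg i
  have h1 : ∑ i, ∑ j, (μ i j : ℝ) * x i ^ 2 = d * ∑ i, x i ^ 2 := by
    simp_rw [← Finset.sum_mul, hreg', ← Finset.mul_sum]
  have h2 : ∑ i, ∑ j, (μ i j : ℝ) * x j ^ 2 = d * ∑ i, x i ^ 2 := by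
    rw [Finset.sum_comm, ← h1]
    exact Finset.sum_congr rfl fun i _ => Finset.sum_congr rfl fun j _ => by rw [hsymm]
  have h3 : ∑ i, ∑ j, (μ i j : ℝ) * (x i * x j) = c * ∑ i, x i ^ 2 := by
    rw [Finset.mul_sum]
    refine Finset.sum_congr rfl fun i _ => ?_
    rw [show c * x i ^ 2 = x i * (c * x i) by ring, ← hx, Finset.mul_sum]
    exact Finset.sum_congr rfl fun j _ => by ring
  have hform : ∑ i, ∑ j, (μ i j : ℝ) * (x i - x j) ^ 2 = 2 * (d - c) * ∑ i, x i ^ 2 := by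
    have : ∑ i, ∑ j, (μ i j : ℝ) * (x i - x j) ^ 2
        = ∑ i, ∑ j, (μ i j : ℝ) * x i ^ 2 + ∑ i, ∑ j, (μ i j : ℝ) * x j ^ 2
          - 2 * ∑ i, ∑ j, (μ i j : ℝ) * (x i * x j) := by
      simp_rw [Finset.mul_sum, ← Finset.sum_add_distrib, ← Finset.sum_sub_distrib]
      exact Finset.sum_congr rfl fun i _ => Finset.sum_congr rfl fun j _ => by ring
    rw [this, h1, h2, h3]
    ring
  have hnn : ∀ i j, 0 ≤ (μ i j : ℝ) * (x i - x j) ^ 2 := fun i j => by positivity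
  have hzero : ∑ i, ∑ j, (μ i j : ℝ) * (x i - x j) ^ 2 = 0 := by
    refine le_antisymm ?_ (Finset.sum_nonneg fun i _ => Finset.sum_nonneg fun j _ => hnn i j)
    rw [hform]
    have : 0 ≤ ∑ i, x i ^ 2 := Finset.sum_nonneg fun i _ => sq_nonneg _
    exact mul_nonpos_of_nonpos_of_nonneg (by linarith) this
  have hedge : ∀ a b, 0 < μ a b → x a = x b := fun a b hab => by
    rw [Finset.sum_eq_zero_iff_of_nonneg fun i _ => Finset.sum_nonneg fun j _ => hnn i j] at hzero
    have h := hzero a (Finset.mem_univ _)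
    rw [Finset.sum_eq_zero_iff_of_nonneg fun j _ => hnn a j] at h
    have h' := h b (Finset.mem_univ _)
    have hne : (μ a b : ℝ) ≠ 0 := by exact_mod_cast hab.ne'
    have := pow_eq_zero_iff (two_ne_zero) |>.1 ((mul_eq_zero.1 h').resolve_left hne)
    linarith
  induction hconn i j with
  | refl => rfl
  | tail _ hab ih => exact ih.trans (hedge _ _ hab)

/-- If every `P x - x` lies in a single eigenspace, `P` being the permutation operator of `g`, then
in a twin-free multigraph `g` is the identity. -/
lemma eq_one_of_permAct_sub_mem {n : ℕ} {μ : Fin n → Fin n → ℕ} (hsymm : ∀ i j, μ i j = μ j i)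
    (hirr : ¬ ∃ x y : Fin n, x ≠ y ∧ ∀ v : Fin n, v ≠ x → v ≠ y → μ x v = μ y v)
    {A : Matrix (Fin n) (Fin n) ℝ} (hA : ∀ i j, A i j = (μ i j : ℝ))
    {g : Equiv.Perm (Fin n)} {c : ℝ}
    (h : ∀ x, permAct g x - x ∈ Module.End.eigenspace (Matrix.toEuclideanLin A) c) : g = 1 := by
  ext1 k
  by_contra hk
  rw [Equiv.Perm.one_apply] at hk
  refine hirr ⟨g k, k, hk, fun v hv hvk => ?_⟩
  have hP : permAct g (EuclideanSpace.single k (1 : ℝ)) = EuclideanSpace.single (g k) 1 := by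
    ext i
    simp [permAct_apply, Equiv.symm_apply_eq]
  have h1 := h (EuclideanSpace.single k (1 : ℝ))
  rw [hP, Module.End.mem_eigenspace_iff, map_sub] at h1
  have h2 := congrArg (fun y : EuclideanSpace ℝ (Fin n) => y v) h1
  simp [toEuclideanLin_coord, hv, hvk, hA] at h2
  rw [hsymm, hsymm k]
  exact_mod_cast sub_eq_zero.1 h2

/-- Let `G` be a connected irreducible `d`-regular loopless multigraph
whose adjacency matrix has exactly `s` distinct eigenvalues `λ_1 > ⋯ > λ_s`, with
eigenspaces `E_1, …, E_s`.  Then `Aut(G)` embeds into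
`O(E_2) × ⋯ × O(E_{s-1})`. -/
theorem aut_regular_multigraph_embeds_middle_eigenspaces
    (n : ℕ) (μ : Fin n → Fin n → ℕ)
    (hsymm : ∀ i j, μ i j = μ j i) (hloop : ∀ i, μ i i = 0)
    (hconn : ∀ i j : Fin n, Relation.ReflTransGen (fun a b => 0 < μ a b) i j)
    (hirr : ¬ ∃ x y : Fin n, x ≠ y ∧ ∀ v : Fin n, v ≠ x → v ≠ y → μ x v = μ y v)
    (d : ℕ) (hreg : ∀ i, ∑ j, μ i j = d)
    (A : Matrix (Fin n) (Fin n) ℝ) (hA : ∀ i j, A i j = (μ i j : ℝ))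
    (s : ℕ) (lam : Fin s → ℝ) (hlam : StrictAnti lam)
    (E : Fin s → Submodule ℝ (EuclideanSpace ℝ (Fin n)))
    (hE : ∀ i, E i = Module.End.eigenspace (Matrix.toEuclideanLin A) (lam i))
    (hEne : ∀ i, E i ≠ ⊥)
    (hdecomp : (⨆ i, E i) = ⊤)
    (hall : ∀ c : ℝ, Module.End.HasEigenvalue (Matrix.toEuclideanLin A) c →
      ∃ i, lam i = c) :
    ∃ φ : mgAut n μ →*
      (∀ j : Fin (s - 2),
        (E ⟨j.val + 1, by have := j.isLt; omega⟩ ≃ₗᵢ[ℝ]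
         E ⟨j.val + 1, by have := j.isLt; omega⟩)),
      Function.Injective φ := by
  rcases Nat.eq_zero_or_pos n with rfl | hn
  · exact ⟨1, fun a b _ => Subsingleton.elim a b⟩
  have hinv : ∀ i, ∀ g ∈ mgAut n μ, ∀ x ∈ E i, permAct g x ∈ E i := fun i g hg x hx => by
    rw [hE] at hx ⊢
    exact permAct_mem_eigenspace hA hg hx
  refine ⟨MonoidHom.pi fun j => permActOn (mgAut n μ) _ (hinv _), ?_⟩
  rw [injective_iff_map_eq_one]
  rintro ⟨g, hg⟩ hker
  have hmid : ∀ i : Fin s, 0 < i.val → i.val + 1 < s → ∀ x ∈ E i, permAct g x = x := by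
    rintro ⟨i, hi⟩ h0 h1 x hx
    obtain ⟨j, rfl⟩ : ∃ j, i = j + 1 := ⟨i - 1, by simp only at h0; omega⟩
    have hj := congrFun hker ⟨j, by simp only at h1; omega⟩
    exact congrArg Subtype.val (DFunLike.congr_fun hj ⟨x, hx⟩)
  -- The all-ones vector is an eigenvector for `d`.
  obtain ⟨i₀, hi₀⟩ : ∃ i, lam i = d := by
    refine hall d ?_
    refine Module.End.hasEigenvalue_of_hasEigenvector (x := WithLp.toLp 2 fun _ => (1 : ℝ)) ⟨?_, ?_⟩
    · rw [Module.End.mem_eigenspace_iff]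
      ext i
      rw [toEuclideanLin_coord]
      simp only [hA, mul_one, PiLp.smul_apply, smul_eq_mul]
      exact_mod_cast hreg i
    · intro h
      have := congrArg (fun y : EuclideanSpace ℝ (Fin n) => y ⟨0, hn⟩) h
      simp at this
  have hs : 0 < s := i₀.pos
  have htop : ∀ x ∈ E ⟨0, hs⟩, permAct g x = x := fun x hx => by
    rw [hE, Module.End.mem_eigenspace_iff] at hx
    have hd : (d : ℝ) ≤ lam ⟨0, hs⟩ := hi₀ ▸ hlam.antitone (Nat.zero_le i₀.val)
    ext i
    refine eigenvector_const hsymm hconn hreg hd (x := fun i => x i) (fun i => ?_) _ _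
    have := congrArg (fun y : EuclideanSpace ℝ (Fin n) => y i) hx
    simpa [toEuclideanLin_coord, hA] using this
  have hlast : ∀ x, permAct g x - x ∈ E ⟨s - 1, by omega⟩ := fun x => by
    have hx : x ∈ ⨆ i, E i := hdecomp ▸ Submodule.mem_top
    induction hx using Submodule.iSup_induction' with
    | mem i x hx =>
      by_cases hi : i.val + 1 < s
      · have : permAct g x = x := by
          rcases Nat.eq_zero_or_pos i.val with h0 | h0
          · obtain rfl : i = ⟨0, hs⟩ := Fin.ext h0
            exact htop x hx
          · exact hmid i h0 hi x hx
        rw [this, sub_self]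
        exact Submodule.zero_mem _
      · have hi' : i = ⟨s - 1, Nat.sub_one_lt_of_lt hs⟩ := Fin.ext (by have := i.isLt; simp only; omega)
        rw [← hi']
        exact Submodule.sub_mem _ (hinv _ g hg x hx) hx
    | zero => simp
    | add x y _ _ hx hy =>
      rw [map_add, add_sub_add_comm]
      exact Submodule.add_mem _ hx hy
  simp_rw [hE] at hlast
  exact Subtype.ext (eq_one_of_permAct_sub_mem hsymm hirr hA hlast)
end

section
/- Every connected, twin-free, strongly regular graph G on n vertices has a regular embedding into a Euclidean space of dimension at most ⌊(n−1)/2⌋: there exist k ≤ ⌊(n−1)/2⌋ and a map f : V(G) → EuclideanSpace ℝ (Fin k) such that the automorphism group of G is isomorphic to the group of isometric bijections of EuclideanSpace ℝ (Fin k) mapping the set f(V(G)) onto itself. -/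
/-!
The adjacency matrix `A` of a strongly regular graph satisfies
`A ^ 2 = (l - m) A + (d - m) + m J`, with `J` the all-ones matrix. Hence on the complement of the
all-ones vector it has only two eigenvalues, the roots `θ, τ` of `X ^ 2 - (l - m) X - (d - m)`, and
the two eigenspaces have dimensions adding up to `n - 1`. The smaller one has dimension at most
`⌊(n - 1) / 2⌋`, and the standard basis is projected orthogonally onto it.

The projection onto the `θ`-eigenspace is `P = (A - τ - c J) / (θ - τ)`, with `c` determined by
`P J = 0`. Its entries are the inner products of the projected points `f i`, so
`‖f i - f j‖ ^ 2 = 2 (-τ - A i j) / (θ - τ)` for `i ≠ j`: distances determine adjacency, and `f` is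
injective as soon as `τ ≠ 0, -1`. Since `θ τ = m - d` and `(θ + 1) (τ + 1) = l + 1 - d`, a root `0`
or `-1` would force `m = d` or `l = d - 1`, and then the graph would have twins
(`mu_lt_degree`, `lambda_add_one_lt_degree`). The construction is `exists_embedding_of_root`.

The points `f i` have centroid `0` and form a tight frame, `x = ∑ i, ⟪x, f i⟫ • f i`.
Therefore an isometry permuting them is determined by the permutation, which preserves the Gram
matrix, and conversely every permutation preserving the Gram matrix is induced by the isometry
`x ↦ ∑ i, ⟪x, f i⟫ • f (g i)`. This is `nonempty_mulEquiv_of_frame`.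
-/

/-- The automorphism group of a simple graph on `Fin n`, as a subgroup of the
permutation group. -/
def sgAut (n : ℕ) (G : SimpleGraph (Fin n)) : Subgroup (Equiv.Perm (Fin n)) where
  carrier := {g | ∀ i j, G.Adj (g i) (g j) ↔ G.Adj i j}
  one_mem' := fun _ _ => Iff.rfl
  mul_mem' := by
    intro a b ha hb i j
    simpa [Equiv.Perm.mul_apply] using (ha (b i) (b j)).trans (hb i j)
  inv_mem' := by
    intro a ha i j
    simpa using (ha (a⁻¹ i) (a⁻¹ j)).symm

open scoped InnerProductSpace

/-! ### Isometries preserving a spanning point set with centroid `0` -/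

/-- An isometry permuting the points `f i` fixes their centroid `0`, hence preserves norms. This
is seen by summing `‖φ x - f (g i)‖ ^ 2 = ‖x - f i‖ ^ 2` over `i`. -/
theorem norm_sq_map_eq {n k : ℕ} [NeZero n]
    {f : Fin n → EuclideanSpace ℝ (Fin k)} (hsum : ∑ i, f i = 0)
    (φ : EuclideanSpace ℝ (Fin k) ≃ᵢ EuclideanSpace ℝ (Fin k))
    (g : Equiv.Perm (Fin n)) (hφ : ∀ i, φ (f i) = f (g i)) (x : EuclideanSpace ℝ (Fin k)) :
    ‖φ x‖ ^ 2 = ‖x‖ ^ 2 := by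
  have hn : (n : ℝ) ≠ 0 := by exact_mod_cast NeZero.ne n
  have hd : ∀ i, ‖φ x‖ ^ 2 - 2 * ⟪φ x, f (g i)⟫_ℝ + ‖f (g i)‖ ^ 2
      = ‖x‖ ^ 2 - 2 * ⟪x, f i⟫_ℝ + ‖f i‖ ^ 2 := by
    intro i
    rw [← norm_sub_sq_real, ← norm_sub_sq_real, ← hφ i, ← dist_eq_norm, ← dist_eq_norm,
      φ.dist_eq]
  have hs : ∑ i, f (g i) = 0 := by rw [Equiv.sum_comp g f, hsum]
  have h2 : ∑ i, ‖f (g i)‖ ^ 2 = ∑ i, ‖f i‖ ^ 2 := Equiv.sum_comp g (fun i => ‖f i‖ ^ 2)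
  have h1 := Finset.sum_congr (rfl : (Finset.univ : Finset (Fin n)) = Finset.univ)
    (fun i _ => hd i)
  simp only [Finset.sum_add_distrib, Finset.sum_sub_distrib, ← Finset.mul_sum, ← inner_sum,
    hs, hsum, h2, inner_zero_right, Finset.sum_const, Finset.card_univ, Fintype.card_fin,
    nsmul_eq_mul] at h1
  exact mul_left_cancel₀ hn (by linarith)

theorem inner_map_eq {n k : ℕ} [NeZero n]
    {f : Fin n → EuclideanSpace ℝ (Fin k)} (hsum : ∑ i, f i = 0)
    (φ : EuclideanSpace ℝ (Fin k) ≃ᵢ EuclideanSpace ℝ (Fin k))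
    (g : Equiv.Perm (Fin n)) (hφ : ∀ i, φ (f i) = f (g i)) (x : EuclideanSpace ℝ (Fin k))
    (i : Fin n) : ⟪φ x, f (g i)⟫_ℝ = ⟪x, f i⟫_ℝ := by
  have h1 := norm_sq_map_eq hsum φ g hφ x
  have h2 := norm_sq_map_eq hsum φ g hφ (f i)
  have h3 : ‖φ x - φ (f i)‖ ^ 2 = ‖x - f i‖ ^ 2 := by
    rw [← dist_eq_norm, ← dist_eq_norm, φ.dist_eq]
  rw [norm_sub_sq_real, norm_sub_sq_real] at h3
  rw [← hφ i]
  linarith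

/-- For a tight frame `f`, a permutation preserving the Gram matrix is induced by the linear
isometry `x ↦ ∑ i, ⟪x, f i⟫ • f (g i)`. -/
theorem exists_isometry_of_gram {n k : ℕ}
    {f : Fin n → EuclideanSpace ℝ (Fin k)} (hframe : ∀ x, ∑ i, ⟪x, f i⟫_ℝ • f i = x)
    (g : Equiv.Perm (Fin n)) (hg : ∀ i j, ⟪f (g i), f (g j)⟫_ℝ = ⟪f i, f j⟫_ℝ) :
    ∃ φ : EuclideanSpace ℝ (Fin k) ≃ᵢ EuclideanSpace ℝ (Fin k), ∀ i, φ (f i) = f (g i) := by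
  let T : EuclideanSpace ℝ (Fin k) →ₗ[ℝ] EuclideanSpace ℝ (Fin k) :=
    { toFun := fun x => ∑ i, ⟪x, f i⟫_ℝ • f (g i)
      map_add' := fun x y => by simp [inner_add_left, add_smul, Finset.sum_add_distrib]
      map_smul' := fun c x => by simp [inner_smul_left, mul_smul, Finset.smul_sum] }
  have hT : ∀ x, T x = ∑ i, ⟪x, f i⟫_ℝ • f (g i) := fun _ => rfl
  have hinner : ∀ x y, ⟪T x, T y⟫_ℝ = ⟪x, y⟫_ℝ := by
    intro x y
    conv_rhs => rw [← hframe x, ← hframe y]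
    simp only [hT, sum_inner, inner_sum, inner_smul_left, inner_smul_right, hg]
  let L : EuclideanSpace ℝ (Fin k) →ₗᵢ[ℝ] EuclideanSpace ℝ (Fin k) := T.isometryOfInner hinner
  refine ⟨(L.toLinearIsometryEquiv rfl).toIsometryEquiv, fun j => ?_⟩
  show T (f j) = f (g j)
  rw [hT, ← hframe (f (g j)), ← Equiv.sum_comp g (fun i => ⟪f (g j), f i⟫_ℝ • f i)]
  exact Finset.sum_congr rfl fun i _ => by rw [hg]

theorem exists_perm_of_isometry {n k : ℕ}
    {f : Fin n → EuclideanSpace ℝ (Fin k)} (hinj : Function.Injective f)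
    (φ : EuclideanSpace ℝ (Fin k) ≃ᵢ EuclideanSpace ℝ (Fin k))
    (hφ : φ '' Set.range f = Set.range f) :
    ∃ g : Equiv.Perm (Fin n), ∀ i, φ (f i) = f (g i) := by
  have h : ∀ i, ∃ j, f j = φ (f i) := fun i => by
    have : φ (f i) ∈ φ '' Set.range f := ⟨f i, ⟨i, rfl⟩, rfl⟩
    rwa [hφ] at this
  choose g hg using h
  have hgi : Function.Injective g := fun a b hab => by
    apply hinj
    apply φ.injective
    rw [← hg, ← hg, hab]
  exact ⟨Equiv.ofBijective g (Finite.injective_iff_bijective.mp hgi), fun i => (hg i).symm⟩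

/-- If the points `f i` are distinct, have centroid `0`, form a tight frame with constant `1`, and
their Gram matrix has exactly the symmetries of `G`, then `f` is a regular embedding of `G`. -/
theorem nonempty_mulEquiv_of_frame {n k : ℕ} [NeZero n] (G : SimpleGraph (Fin n))
    (f : Fin n → EuclideanSpace ℝ (Fin k)) (hinj : Function.Injective f)
    (hsum : ∑ i, f i = 0) (hframe : ∀ x, ∑ i, ⟪x, f i⟫_ℝ • f i = x)
    (hgram : ∀ g : Equiv.Perm (Fin n),
      g ∈ sgAut n G ↔ ∀ i j, ⟪f (g i), f (g j)⟫_ℝ = ⟪f i, f j⟫_ℝ) :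
    Nonempty (sgAut n G ≃* isomPreserving k (Set.range f)) := by
  have hex : ∀ φ : isomPreserving k (Set.range f), ∃ g : sgAut n G,
      ∀ i, φ.1 (f i) = f (g.1 i) := by
    intro φ
    obtain ⟨g, hg⟩ := exists_perm_of_isometry hinj φ.1 φ.2
    refine ⟨⟨g, (hgram g).2 fun i j => ?_⟩, hg⟩
    rw [← hg i, inner_map_eq hsum φ.1 g hg]
  choose F hF using hex
  let Φ : isomPreserving k (Set.range f) →* sgAut n G := MonoidHom.mk' F (by
    intro a b
    ext1
    ext1 i
    apply hinj
    rw [← hF]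
    show a.1 (b.1 (f i)) = f ((F a).1 ((F b).1 i))
    rw [hF, hF])
  refine ⟨(MulEquiv.ofBijective Φ ⟨?_, ?_⟩).symm⟩
  -- An isometry fixing every `f i` preserves all frame coefficients `⟪x, f i⟫`, so it is `1`.
  · rw [injective_iff_map_eq_one]
    intro φ hφ
    have hφ' : F φ = 1 := hφ
    have hfix : ∀ i, φ.1 (f i) = f ((1 : Equiv.Perm (Fin n)) i) := by
      intro i
      rw [hF φ i, hφ']
      rfl
    ext1
    ext1 x
    show φ.1 x = x
    rw [← hframe (φ.1 x)]
    conv_rhs => rw [← hframe x]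
    exact Finset.sum_congr rfl fun i _ => by
      rw [← inner_map_eq hsum φ.1 1 hfix x i, Equiv.Perm.one_apply]
  · intro g
    obtain ⟨φ, hφ⟩ := exists_isometry_of_gram hframe g.1 ((hgram g.1).1 g.2)
    have hmem : φ '' Set.range f = Set.range f := by
      have : φ ∘ f = f ∘ g.1 := funext hφ
      rw [← Set.range_comp, this, g.1.surjective.range_comp]
    refine ⟨⟨φ, hmem⟩, ?_⟩
    ext1
    ext1 i
    apply hinj
    exact (hF ⟨φ, hmem⟩ i).symm.trans (hφ i)

/-! ### Frames from projection matrices -/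

/-- A symmetric idempotent matrix is the Gram matrix of a tight frame with constant `1`: its rows,
in coordinates of an orthonormal basis of their span. -/
theorem exists_frame_of_projection {n : ℕ} (P : Matrix (Fin n) (Fin n) ℝ)
    (hsymm : P.IsSymm) (hidem : P * P = P) :
    ∃ (k : ℕ) (f : Fin n → EuclideanSpace ℝ (Fin k)),
      (∀ i j, ⟪f i, f j⟫_ℝ = P i j) ∧ (∀ x, ∑ i, ⟪x, f i⟫_ℝ • f i = x) := by
  let v : Fin n → EuclideanSpace ℝ (Fin n) := fun i => WithLp.toLp 2 (P i)
  have hv : ∀ i j, ⟪v i, v j⟫_ℝ = P i j := by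
    intro i j
    have := congrFun (congrFun hidem i) j
    rw [← this, Matrix.mul_apply]
    simp only [v, PiLp.inner_apply, RCLike.inner_apply, conj_trivial]
    exact Finset.sum_congr rfl fun a _ => by rw [hsymm.apply j a, mul_comm]
  let W : Submodule ℝ (EuclideanSpace ℝ (Fin n)) := Submodule.span ℝ (Set.range v)
  have hW : ∀ w ∈ W, ∑ i, ⟪w, v i⟫_ℝ • v i = w := by
    intro w hw
    induction hw using Submodule.span_induction with
    | mem x hx =>
      obtain ⟨j, rfl⟩ := hx
      simp only [hv]
      ext a
      have := congrFun (congrFun hidem j) a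
      rw [Matrix.mul_apply] at this
      simpa [v] using this
    | zero => simp
    | add x y _ _ hx hy =>
      simp only [inner_add_left, add_smul, Finset.sum_add_distrib, hx, hy]
    | smul c x _ hx =>
      simp only [inner_smul_left, mul_smul, ← Finset.smul_sum, hx, conj_trivial]
  let e := (stdOrthonormalBasis ℝ W).repr
  refine ⟨Module.finrank ℝ W, fun i => e ⟨v i, Submodule.subset_span ⟨i, rfl⟩⟩, ?_, ?_⟩
  · intro i j
    rw [e.inner_map_map]
    exact hv i j
  · intro x
    obtain ⟨w, rfl⟩ := e.surjective x
    simp only [e.inner_map_map]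
    simp only [← map_smul, ← map_sum]
    congr 1
    ext1
    simpa using hW w.1 w.2

/-- The dimension of the ambient space of a tight frame with constant `1` is the trace of the
Gram matrix. -/
theorem finrank_eq_sum_gram {n k : ℕ} {f : Fin n → EuclideanSpace ℝ (Fin k)}
    (hframe : ∀ x, ∑ i, ⟪x, f i⟫_ℝ • f i = x) : (k : ℝ) = ∑ i, ⟪f i, f i⟫_ℝ := by
  let b := EuclideanSpace.basisFun (Fin k) ℝ
  have h1 : ∀ i, ⟪f i, f i⟫_ℝ = ∑ a, ⟪f i, b a⟫_ℝ * ⟪b a, f i⟫_ℝ := fun i =>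
    (b.sum_inner_mul_inner (f i) (f i)).symm
  have h2 : ∀ a, ∑ i, ⟪f i, b a⟫_ℝ * ⟪b a, f i⟫_ℝ = 1 := by
    intro a
    have := congrArg (fun y => ⟪y, b a⟫_ℝ) (hframe (b a))
    simp only [sum_inner, inner_smul_left, conj_trivial] at this
    rw [real_inner_self_eq_norm_sq, b.norm_eq_one, one_pow] at this
    rw [← this]
    exact Finset.sum_congr rfl fun i _ => mul_comm _ _
  simp_rw [h1]
  rw [Finset.sum_comm]
  simp [h2]

/-! ### The eigenspaces of a strongly regular graph -/

/-- If `θ ≠ τ` are the roots of `X ^ 2 - (l - m) * X - (d - m)` and `τ ∉ {0, -1}`, then projecting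
the standard basis onto the `θ`-eigenspace of the adjacency matrix (orthogonal to the all-ones
vector) is a regular embedding. The first conjunct gives the dimension `k` of this eigenspace. -/
theorem exists_embedding_of_root {n d l m : ℕ} [NeZero n] (G : SimpleGraph (Fin n))
    [DecidableRel G.Adj] (hSRG : G.IsSRGWith n d l m) (θ τ : ℝ) (hne : θ ≠ τ)
    (hadd : θ + τ = l - m) (hmul : θ * τ = m - d) (h0 : τ ≠ 0) (h1 : τ ≠ -1) :
    ∃ (k : ℕ) (f : Fin n → EuclideanSpace ℝ (Fin k)),
      (k : ℝ) * (θ - τ) = -((n - 1) * τ + d) ∧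
      Nonempty (sgAut n G ≃* isomPreserving k (Set.range f)) := by
  have hn : (n : ℝ) ≠ 0 := by exact_mod_cast NeZero.ne n
  have hD : θ - τ ≠ 0 := sub_ne_zero.2 hne
  set A : Matrix (Fin n) (Fin n) ℝ := G.adjMatrix ℝ with hA
  have hrow : ∀ i, ∑ j, A i j = d := by
    intro i
    have := G.adjMatrix_mulVec_const_apply_of_regular (α := ℝ) (a := 1) hSRG.regular (v := i)
    simpa [Matrix.mulVec, dotProduct, hA] using this
  have hAs : ∀ i j, A i j = A j i := fun i j => by
    simp [hA, G.adj_comm]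
  have hcol : ∀ j, ∑ i, A i j = d := fun j => by
    rw [← hrow j]
    exact Finset.sum_congr rfl fun i _ => hAs i j
  have hsq : ∀ i j, ∑ a, A i a * A a j
      = (θ + τ) * A i j - θ * τ * (1 : Matrix (Fin n) (Fin n) ℝ) i j + m := by
    intro i j
    have := congrFun (congrFun (hSRG.matrix_eq (α := ℝ)) i) j
    rw [pow_two, Matrix.mul_apply] at this
    rw [this, hadd, hmul]
    simp only [Matrix.add_apply, Matrix.smul_apply, SimpleGraph.adjMatrix_apply]
    by_cases hij : i = j
    · subst hij
      simp [hA]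
    · by_cases hadj : G.Adj i j <;> simp [hA, hij, hadj]
  -- Counting walks of length two from a fixed vertex.
  have hparam : (n : ℝ) * m = (d - θ) * (d - τ) := by
    have i0 : Fin n := 0
    have h := Finset.sum_congr (rfl : (Finset.univ : Finset (Fin n)) = Finset.univ)
      (fun j _ => hsq i0 j)
    rw [Finset.sum_comm] at h
    simp only [← Finset.mul_sum, hrow, ← Finset.sum_mul, Finset.sum_add_distrib,
      Finset.sum_sub_distrib, Matrix.one_apply, Finset.sum_ite_eq, Finset.mem_univ, if_true,
      Finset.sum_const, Finset.card_univ, Fintype.card_fin, nsmul_eq_mul] at h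
    linear_combination -h
  -- `c` is chosen so that `P` below kills the all-ones vector.
  set c : ℝ := (d - τ) / n with hc
  have hcn : c * n = d - τ := by rw [hc]; field_simp
  have hcm : (m : ℝ) = c * (d - θ) := by
    apply mul_left_cancel₀ hn
    linear_combination hparam - (d - θ) * hcn
  let P : Matrix (Fin n) (Fin n) ℝ :=
    Matrix.of fun i j => (A i j - τ * (1 : Matrix (Fin n) (Fin n) ℝ) i j - c) / (θ - τ)
  have hone : ∀ i j, (1 : Matrix (Fin n) (Fin n) ℝ) i j = (1 : Matrix (Fin n) (Fin n) ℝ) j i := by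
    intro i j
    simp [Matrix.one_apply, eq_comm]
  have hone_col : ∀ j, ∑ i, (1 : Matrix (Fin n) (Fin n) ℝ) i j = 1 := by
    intro j
    simp [Matrix.one_apply]
  have hPs : P.IsSymm := by
    ext i j
    simp only [P, Matrix.transpose_apply, Matrix.of_apply, hAs i j, hone i j]
  have hPi : P * P = P := by
    let J : Matrix (Fin n) (Fin n) ℝ := Matrix.of fun _ _ => 1
    have hx : P = (θ - τ)⁻¹ • (A - τ • 1 - c • J) := by
      ext i j
      simp [P, J]
      ring
    have e1 : A * J = (d : ℝ) • J := by
      ext i j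
      simp [Matrix.mul_apply, hrow, J]
    have e2 : J * A = (d : ℝ) • J := by
      ext i j
      simp [Matrix.mul_apply, hcol, J]
    have e3 : J * J
        = (n : ℝ) • J := by
      ext i j
      simp [Matrix.mul_apply, J]
    have e4 : A * A = (θ + τ) • A - (θ * τ) • 1 + (m : ℝ) • J := by
      ext i j
      rw [Matrix.mul_apply, hsq]
      simp [J]
    rw [hx, smul_mul_smul_comm]
    simp only [mul_sub, sub_mul, smul_mul_assoc, mul_smul_comm, e1, e2, e3, e4, mul_one, one_mul]
    ext i j
    simp only [Matrix.smul_apply, Matrix.sub_apply, Matrix.add_apply, J, Matrix.of_apply,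
      smul_eq_mul]
    field_simp
    linear_combination hcm + c * hcn
  obtain ⟨k, f, hgram, hframe⟩ := exists_frame_of_projection P hPs hPi
  have hval : ∀ i j, ⟪f i, f j⟫_ℝ * (θ - τ)
      = A i j - τ * (1 : Matrix (Fin n) (Fin n) ℝ) i j - c := fun i j => by
    rw [hgram]
    exact div_mul_cancel₀ _ hD
  have hinj : Function.Injective f := by
    intro i j hij
    by_contra hij_ne
    -- Equal points would force `-τ = A i j`, which is `0` or `1`.
    have h2 := hval i i
    have h3 := hval i j
    rw [← hij, h2] at h3
    by_cases hadj : G.Adj i j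
    · simp [hA, hadj, hij_ne] at h3
      exact h1 (by linarith)
    · simp [hA, hadj, hij_ne] at h3
      exact h0 h3
  refine ⟨k, f, ?_, nonempty_mulEquiv_of_frame G f hinj ?_ hframe fun g => ?_⟩
  · rw [finrank_eq_sum_gram hframe, Finset.sum_mul]
    simp only [hval]
    simp [hA]
    linear_combination -hcn
  · rw [← inner_self_eq_zero (𝕜 := ℝ)]
    apply mul_right_cancel₀ hD
    simp only [sum_inner, inner_sum, Finset.sum_mul, hval, Finset.sum_sub_distrib, hcol,
      ← Finset.mul_sum, hone_col, Finset.sum_const, Finset.card_univ, Fintype.card_fin,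
      nsmul_eq_mul]
    linear_combination -(n : ℝ) * hcn
  · constructor
    · intro hg i j
      apply mul_right_cancel₀ hD
      rw [hval, hval]
      simp [hA, hg i j, Matrix.one_apply]
    · intro hg i j
      have h2 := congrArg (· * (θ - τ)) (hg i j)
      simp only [hval] at h2
      by_cases ha : G.Adj (g i) (g j) <;> by_cases hb : G.Adj i j <;>
        simp [hA, ha, hb, Matrix.one_apply] at h2 ⊢
      linarith

/-! ### Parameters of twin-free strongly regular graphs -/

/-- If `m = d`, then any two non-adjacent vertices have the same neighbourhood. -/
theorem mu_lt_degree {n d l m : ℕ} {G : SimpleGraph (Fin n)} [DecidableRel G.Adj]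
    (hSRG : G.IsSRGWith n d l m)
    (htf : ¬ ∃ x y : Fin n, x ≠ y ∧
      ∀ v : Fin n, v ≠ x → v ≠ y → (G.Adj v x ↔ G.Adj v y))
    {x y : Fin n} (hxy : x ≠ y) (hadj : ¬ G.Adj x y) : m < d := by
  have hcard := hSRG.of_not_adj hxy hadj
  have hsub : ∀ u w : Fin n, (G.commonNeighbors u w).toFinset ⊆ G.neighborFinset u := by
    intro u w v hv
    rw [Set.mem_toFinset] at hv
    exact (G.mem_neighborFinset _ _).2 hv.1
  rw [← Set.toFinset_card] at hcard
  have hdx : (G.neighborFinset x).card = d := hSRG.regular x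
  have hdy : (G.neighborFinset y).card = d := hSRG.regular y
  have hle := Finset.card_le_card (hsub x y)
  refine lt_of_le_of_ne (by omega) fun hmd => htf ⟨x, y, hxy, fun v _ _ => ?_⟩
  have hx := Finset.eq_of_subset_of_card_le (hsub x y) (by omega)
  have hy := Finset.eq_of_subset_of_card_le (s := (G.commonNeighbors x y).toFinset)
    (t := G.neighborFinset y) (fun v hv => by
      rw [Set.mem_toFinset] at hv
      exact (G.mem_neighborFinset _ _).2 hv.2) (by omega)
  have := Finset.ext_iff.1 (hx.symm.trans hy) v
  simpa [G.adj_comm] using this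

/-- If `l = d - 1`, then any two adjacent vertices have the same closed neighbourhood. -/
theorem lambda_add_one_lt_degree {n d l m : ℕ} {G : SimpleGraph (Fin n)} [DecidableRel G.Adj]
    (hSRG : G.IsSRGWith n d l m)
    (htf : ¬ ∃ x y : Fin n, x ≠ y ∧
      ∀ v : Fin n, v ≠ x → v ≠ y → (G.Adj v x ↔ G.Adj v y))
    {x y : Fin n} (hadj : G.Adj x y) : l + 1 < d := by
  have hcard := hSRG.of_adj x y hadj
  rw [← Set.toFinset_card] at hcard
  have hdx : ((G.neighborFinset x).erase y).card = d - 1 := by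
    rw [Finset.card_erase_of_mem ((G.mem_neighborFinset _ _).2 hadj)]
    exact congrArg (· - 1) (hSRG.regular x)
  have hdy : ((G.neighborFinset y).erase x).card = d - 1 := by
    rw [Finset.card_erase_of_mem ((G.mem_neighborFinset _ _).2 hadj.symm)]
    exact congrArg (· - 1) (hSRG.regular y)
  have hd : 0 < d := by
    rw [← hSRG.regular x]
    exact (G.degree_pos_iff_exists_adj x).2 ⟨y, hadj⟩
  have hsx : (G.commonNeighbors x y).toFinset ⊆ (G.neighborFinset x).erase y := by
    intro v hv
    rw [Set.mem_toFinset] at hv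
    exact Finset.mem_erase.2 ⟨G.ne_of_adj hv.2 |>.symm, (G.mem_neighborFinset _ _).2 hv.1⟩
  have hsy : (G.commonNeighbors x y).toFinset ⊆ (G.neighborFinset y).erase x := by
    intro v hv
    rw [Set.mem_toFinset] at hv
    exact Finset.mem_erase.2 ⟨G.ne_of_adj hv.1 |>.symm, (G.mem_neighborFinset _ _).2 hv.2⟩
  have hle := Finset.card_le_card hsx
  refine lt_of_le_of_ne (by omega) fun hmd => htf ⟨x, y, hadj.ne, fun v hvx hvy => ?_⟩
  have hx := Finset.eq_of_subset_of_card_le hsx (by omega)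
  have hy := Finset.eq_of_subset_of_card_le hsy (by omega)
  have := Finset.ext_iff.1 (hx.symm.trans hy) v
  simpa [G.adj_comm, hvx, hvy] using this

/-- Every connected twin-free strongly regular graph on `n` vertices has
a regular embedding into a Euclidean space of dimension at most `⌊(n-1)/2⌋`. -/
theorem srg_regular_embedding (n d l m : ℕ) (G : SimpleGraph (Fin n)) [DecidableRel G.Adj]
    (hSRG : G.IsSRGWith n d l m) (hconn : G.Connected)
    (htf : ¬ ∃ x y : Fin n, x ≠ y ∧
      ∀ v : Fin n, v ≠ x → v ≠ y → (G.Adj v x ↔ G.Adj v y)) :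
    ∃ k : ℕ, k ≤ (n - 1) / 2 ∧
      ∃ f : Fin n → EuclideanSpace ℝ (Fin k),
        Nonempty (sgAut n G ≃* isomPreserving k (Set.range f)) := by
  have : NeZero n := ⟨by
    rintro rfl
    exact Fin.elim0 hconn.nonempty.some⟩
  have hn : 0 < n := NeZero.pos n
  -- A single vertex embeds into the zero-dimensional space.
  obtain rfl | hn1 := Nat.eq_or_lt_of_le (Nat.succ_le_of_lt hn)
  · refine ⟨0, le_refl 0, fun _ => 0, nonempty_mulEquiv_of_frame G _
      (Function.injective_of_subsingleton _) (Subsingleton.elim _ _)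
      (fun x => Subsingleton.elim _ _) fun g => ?_⟩
    simp [Subsingleton.elim g 1, one_mem]
  -- The graph is not complete, since any two vertices of a complete graph are twins.
  have hex : ∃ x y : Fin n, x ≠ y ∧ ¬ G.Adj x y := by
    by_contra! hall
    have h01 : (⟨0, hn⟩ : Fin n) ≠ ⟨1, hn1⟩ := by simp
    exact htf ⟨_, _, h01, fun v hx hy => iff_of_true (hall _ _ hx) (hall _ _ hy)⟩
  obtain ⟨x, y, hxy, hnadj⟩ := hex
  have hmd := mu_lt_degree hSRG htf hxy hnadj
  obtain ⟨z, hz⟩ := (G.degree_pos_iff_exists_adj x).1 (by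
    rw [hSRG.regular x]
    omega)
  have hld := lambda_add_one_lt_degree hSRG htf hz
  have hmdR : (m : ℝ) < d := by exact_mod_cast hmd
  have hldR : (l : ℝ) + 1 < d := by exact_mod_cast hld
  set s : ℝ := l - m with hs
  set D : ℝ := √(s ^ 2 + 4 * (d - m)) with hDdef
  have hpos : 0 < s ^ 2 + 4 * ((d : ℝ) - m) := by nlinarith [sq_nonneg s]
  have hDpos : 0 < D := Real.sqrt_pos.2 hpos
  have hD2 : D ^ 2 = s ^ 2 + 4 * (d - m) := Real.sq_sqrt hpos.le
  obtain ⟨θ, hθ⟩ : ∃ θ, θ = (s + D) / 2 := ⟨_, rfl⟩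
  obtain ⟨τ, hτ⟩ : ∃ τ, τ = (s - D) / 2 := ⟨_, rfl⟩
  have hadd : θ + τ = s := by rw [hθ, hτ]; ring
  have hmul : θ * τ = m - d := by rw [hθ, hτ]; linear_combination -hD2 / 4
  have hsub : θ - τ = D := by rw [hθ, hτ]; ring
  have hne : θ ≠ τ := fun h => by
    rw [h, sub_self] at hsub
    exact hDpos.ne hsub
  -- `-1` is not a root, since `(θ + 1) * (τ + 1) = l + 1 - d`.
  have hmul1 : (θ + 1) * (τ + 1) = l + 1 - d := by linear_combination hmul + hadd + hs
  have hθ0 : θ ≠ 0 := fun h => by rw [h] at hmul; linarith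
  have hτ0 : τ ≠ 0 := fun h => by rw [h] at hmul; linarith
  have hθ1 : θ ≠ -1 := fun h => by rw [h] at hmul1; linarith
  have hτ1 : τ ≠ -1 := fun h => by rw [h] at hmul1; linarith
  obtain ⟨k₁, f₁, hk₁, hf₁⟩ := exists_embedding_of_root G hSRG θ τ hne hadd hmul hτ0 hτ1
  obtain ⟨k₂, f₂, hk₂, hf₂⟩ := exists_embedding_of_root G hSRG τ θ hne.symm
    ((add_comm _ _).trans hadd) ((mul_comm _ _).trans hmul) hθ0 hθ1
  have hk : (k₁ : ℝ) + k₂ + 1 = n := by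
    apply mul_right_cancel₀ (sub_ne_zero.2 hne)
    linear_combination hk₁ - hk₂
  have hk' : k₁ + k₂ + 1 = n := by exact_mod_cast hk
  rcases le_total k₁ k₂ with h | h
  · exact ⟨k₁, by omega, f₁, hf₁⟩
  · exact ⟨k₂, by omega, f₂, hf₂⟩
end

section
/- Let A be an n×n real symmetric matrix all of whose eigenvalues are simple (A has n distinct eigenvalues), and let g be an n×n permutation matrix commuting with A (gA = Ag). Then g² = I; i.e., every permutation matrix commuting with a real symmetric matrix having only simple eigenvalues is an involution. In particular, if the adjacency matrix of a loopless multigraph G has n distinct eigenvalues, then every automorphism of G is an involution. -/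
/-!
A matrix commuting with a real symmetric matrix `A` with simple spectrum preserves each
one-dimensional eigenspace of `A`, so it is diagonal in an orthonormal eigenbasis of `A` and
therefore symmetric (`transpose_eq_of_commute_of_simple_spectrum`). A permutation matrix `P` is
orthogonal, so if it is also symmetric then `P * P = P * Pᵀ = 1`. An automorphism of a multigraph
is a permutation whose matrix commutes with the adjacency matrix, and `g ↦ g.permMatrix ℝ`
is injective, which gives the second part.
-/

theorem isDiag_of_commute_diagonal {n : ℕ} {d : Fin n → ℝ} (hd : Function.Injective d)
    {Q : Matrix (Fin n) (Fin n) ℝ} (h : Q * Matrix.diagonal d = Matrix.diagonal d * Q) :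
    Q.IsDiag := by
  intro i j hij
  have h1 := congrFun (congrFun h i) j
  rw [Matrix.mul_diagonal, Matrix.diagonal_mul] at h1
  have h2 : (d i - d j) * Q i j = 0 := by linarith
  exact (mul_eq_zero.mp h2).resolve_left (sub_ne_zero.mpr (hd.ne hij))

theorem transpose_eq_of_commute_of_simple_spectrum {n : ℕ} {A : Matrix (Fin n) (Fin n) ℝ}
    (hA : A.IsHermitian) (hd : Function.Injective hA.eigenvalues)
    {M : Matrix (Fin n) (Fin n) ℝ} (h : M * A = A * M) : M.transpose = M := by
  obtain ⟨U, hU, hAU⟩ : ∃ U : Matrix (Fin n) (Fin n) ℝ, U * U.transpose = 1 ∧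
      U.transpose * A * U = Matrix.diagonal hA.eigenvalues := by
    refine ⟨hA.eigenvectorUnitary, ?_, ?_⟩
    · simpa [Matrix.star_eq_conjTranspose] using
        Unitary.coe_mul_star_self hA.eigenvectorUnitary
    · simpa [Unitary.conjStarAlgAut_apply, Matrix.star_eq_conjTranspose, Function.comp_def] using
        hA.conjStarAlgAut_star_eigenvectorUnitary
  have hcancel : ∀ X Y : Matrix (Fin n) (Fin n) ℝ,
      (U.transpose * X * U) * (U.transpose * Y * U) = U.transpose * (X * Y) * U := by
    intro X Y
    calc _ = U.transpose * X * (U * U.transpose) * Y * U := by simp only [Matrix.mul_assoc]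
      _ = _ := by rw [hU]; simp only [Matrix.mul_assoc, Matrix.one_mul]
  have hdiag : (U.transpose * M * U).IsDiag := by
    apply isDiag_of_commute_diagonal hd
    rw [← hAU, hcancel, hcancel, h]
  have hsymm : U.transpose * M.transpose * U = U.transpose * M * U := by
    simpa [Matrix.transpose_mul, Matrix.mul_assoc] using hdiag.isSymm.eq
  have hback : ∀ X : Matrix (Fin n) (Fin n) ℝ, U * (U.transpose * X * U) * U.transpose = X := by
    intro X
    calc _ = (U * U.transpose) * X * (U * U.transpose) := by simp only [Matrix.mul_assoc]
      _ = X := by rw [hU, Matrix.one_mul, Matrix.mul_one]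
  rw [← hback M.transpose, hsymm, hback]

theorem permMatrix_mul_transpose_self {n : ℕ} (g : Equiv.Perm (Fin n)) :
    g.permMatrix ℝ * (g.permMatrix ℝ).transpose = 1 := by
  rw [Matrix.transpose_permMatrix, ← Matrix.permMatrix_mul, inv_mul_cancel, Matrix.permMatrix_one]

/-- Every permutation matrix commuting with a real symmetric matrix
having `n` distinct (hence simple) eigenvalues is an involution.  In particular, if
the adjacency matrix of a loopless multigraph has `n` distinct eigenvalues, then
every automorphism of the multigraph is an involution. -/
theorem perm_commuting_with_simple_spectrum_is_involution
    (n : ℕ) (A : Matrix (Fin n) (Fin n) ℝ) (hA : A.IsHermitian)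
    (hdistinct : Function.Injective hA.eigenvalues) :
    (∀ g : Equiv.Perm (Fin n),
      (g.permMatrix ℝ) * A = A * (g.permMatrix ℝ) →
      (g.permMatrix ℝ) * (g.permMatrix ℝ) = 1) ∧
    (∀ μ : Fin n → Fin n → ℕ, (∀ i j, μ i j = μ j i) → (∀ i, μ i i = 0) →
      (∀ i j, A i j = (μ i j : ℝ)) →
      ∀ g : Equiv.Perm (Fin n), (∀ i j, μ (g i) (g j) = μ i j) → g * g = 1) := by
  have key : ∀ g : Equiv.Perm (Fin n), (g.permMatrix ℝ) * A = A * (g.permMatrix ℝ) →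
      (g.permMatrix ℝ) * (g.permMatrix ℝ) = 1 := by
    intro g h
    have h1 := permMatrix_mul_transpose_self g
    rwa [transpose_eq_of_commute_of_simple_spectrum hA hdistinct h] at h1
  refine ⟨key, fun μ _ _ hμ g hg => ?_⟩
  have hcomm : (g.permMatrix ℝ) * A = A * (g.permMatrix ℝ) := by
    ext i j
    rw [Equiv.Perm.permMatrix, PEquiv.toMatrix_toPEquiv_mul, PEquiv.mul_toMatrix_toPEquiv]
    have h1 := hg i (g.symm j)
    rw [Equiv.apply_symm_apply] at h1
    simp [hμ, h1]
  have h := key g hcomm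
  rw [← Matrix.permMatrix_mul] at h
  ext i
  -- Row `i` of the permutation matrix of `g * g` has its only nonzero entry in column `g (g i)`.
  have h1 := congrFun (congrFun h i) ((g * g) i)
  by_contra hne
  have hne' : i ≠ (g * g) i := fun he => hne (by simpa using congrArg Fin.val he.symm)
  rw [Matrix.one_apply_ne hne'] at h1
  simp [Equiv.Perm.permMatrix, PEquiv.toMatrix_apply] at h1
end
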